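/- Let n ≥ 1, let b ≥ 1 be an integer, α ∈ (1/2, 1], and let p(·) ∈ P^log([0,∞)) with b+1 < p⁻ ≤ p⁺ < ∞. Let q ∈ (1,∞) be a constant with q > nb/(2α) such that for a.e. t ≥ 0: b/p(t) + nb/(2αq) < 1 ≤ (b+1)/p(t) + nb/(2αq). Let q̄(·) ∈ P^emb_q(ℝ^n), let u₀ ∈ L^{q̄(·)}(ℝ^n), and let f : (0,∞)×ℝ^n → ℝ be measurable with ∫_0^∞ ‖f(s,·)‖_{L^{q̄(·)}(ℝ^n)} ds < ∞. Then there exist T ∈ (0,∞), R > 0, and a measurable u : [0,T]×ℝ^n → ℝ with ‖u‖_{E_T} ≤ R which is a mild solution (with γ = 0) of ∂_t u + (−Δ)^α u = |u|^b u + f with data u₀ on [0,T], and u is the unique mild solution on [0,T] satisfying ‖u‖_{E_T} ≤ R. -/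

import Mathlib

open MeasureTheory Set
open scoped ENNReal FourierTransform

noncomputable section

/-- Euclidean space `ℝ^n`. -/
abbrev Rn (n : ℕ) := EuclideanSpace ℝ (Fin n)

/-- Luxemburg norm of an `ℝ≥0∞`-valued function for a variable exponent `p`. -/
def luxNorm {Ω : Type*} [MeasurableSpace Ω] (μ : Measure Ω) (p : Ω → ℝ) (f : Ω → ℝ≥0∞) : ℝ≥0∞ :=
  sInf {lam : ℝ≥0∞ | 0 < lam ∧ ∫⁻ x, (f x / lam) ^ (p x) ∂μ ≤ 1}

/-- Luxemburg norm `‖f‖_{L^{p(·)}}` of a real-valued function. -/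
def luxNormR {Ω : Type*} [MeasurableSpace Ω] (μ : Measure Ω) (p : Ω → ℝ) (f : Ω → ℝ) : ℝ≥0∞ :=
  luxNorm μ p (fun x => ENNReal.ofReal |f x|)

/-- `p(·) ∈ P^log(Ω)`: measurable, with values in `[1,∞)` on `Ω`, locally log-Hölder
continuous on `Ω`, and satisfying the log-Hölder decay condition on `Ω`. -/
def IsPLog {E : Type*} [NormedAddCommGroup E] [MeasurableSpace E] (Ω : Set E) (p : E → ℝ) : Prop :=
  Measurable p ∧ (∀ x ∈ Ω, 1 ≤ p x) ∧
  ∃ C₁ > (0:ℝ), ∃ C₂ > (0:ℝ), ∃ pinf : ℝ,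
    (∀ x ∈ Ω, ∀ y ∈ Ω, x ≠ y →
      |1 / p x - 1 / p y| ≤ C₁ / Real.log (Real.exp 1 + 1 / ‖x - y‖)) ∧
    (∀ x ∈ Ω, |1 / p x - 1 / pinf| ≤ C₂ / Real.log (Real.exp 1 + ‖x‖))

/-- The fractional heat kernel `𝔤_t^α` on `ℝ^n`: the inverse Fourier transform of
`ξ ↦ exp (-t‖ξ‖^{2α})` (it is real-valued; we take the real part). -/
def gKer (n : ℕ) (α t : ℝ) (x : Rn n) : ℝ :=
  (𝓕⁻ (fun ξ : Rn n => (Real.exp (-t * ‖ξ‖ ^ (2 * α)) : ℂ)) x).re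

/-- Convolution on `ℝ^n`. -/
def conv (n : ℕ) (g f : Rn n → ℝ) (x : Rn n) : ℝ := ∫ y, g (x - y) * f y

/-- The class `P^emb_q(ℝ^n)` of variable exponents whose Lebesgue space embeds in `L^q`. -/
def IsPembq (n : ℕ) (q : ℝ) (qb : Rn n → ℝ) : Prop :=
  IsPLog univ qb ∧ q ≤ essInf qb volume ∧
  (∃ M : ℝ, ∀ᵐ x ∂(volume : Measure (Rn n)), qb x ≤ M) ∧
  Filter.Tendsto (fun x : Rn n => q * qb x / (qb x - q)) (Filter.cocompact (Rn n)) Filter.atTop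

/-- The Luxemburg-type norm of `E_T = L^{p(·)}([0,T], L^q(ℝ^n))`:
`‖u‖_{E_T} = inf {λ > 0 : ∫_0^T (‖u(t,·)‖_{L^q}/λ)^{p(t)} dt ≤ 1}`. -/
def eNormT (n : ℕ) (p : ℝ → ℝ) (q T : ℝ) (u : ℝ → Rn n → ℝ) : ℝ≥0∞ :=
  sInf {lam : ℝ≥0∞ | 0 < lam ∧
    ∫⁻ t in Ioc (0:ℝ) T, (eLpNorm (u t) (ENNReal.ofReal q) volume / lam) ^ (p t) ≤ 1}

/-- Mild solution (γ = 0), on the time set `S`, of `∂_t u + (-Δ)^α u = |u|^b u + f`,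
`u(0) = u₀`: for a.e. `(t,x)` with `t ∈ S`, all integrals converge absolutely and the
Duhamel formula holds. -/
def IsMildSol0 (n : ℕ) (α : ℝ) (b : ℕ) (S : Set ℝ) (f : ℝ → Rn n → ℝ) (u₀ : Rn n → ℝ)
    (u : ℝ → Rn n → ℝ) : Prop :=
  ∀ᵐ tx : ℝ × Rn n ∂((volume.restrict S).prod volume),
    Integrable (fun y => gKer n α tx.1 (tx.2 - y) * u₀ y) volume ∧
    IntegrableOn (fun sy : ℝ × Rn n => gKer n α (tx.1 - sy.1) (tx.2 - sy.2) * f sy.1 sy.2)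
      (Ioc 0 tx.1 ×ˢ univ) (volume.prod volume) ∧
    IntegrableOn (fun sy : ℝ × Rn n =>
        gKer n α (tx.1 - sy.1) (tx.2 - sy.2) * (|u sy.1 sy.2| ^ b * u sy.1 sy.2))
      (Ioc 0 tx.1 ×ˢ univ) (volume.prod volume) ∧
    u tx.1 tx.2 = conv n (gKer n α tx.1) u₀ tx.2
      + (∫ s in Ioc (0:ℝ) tx.1, conv n (gKer n α (tx.1 - s)) (f s) tx.2)
      - ∫ s in Ioc (0:ℝ) tx.1, conv n (gKer n α (tx.1 - s)) (fun y => |u s y| ^ b * u s y) tx.2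

/-!
Writing the Duhamel formula with the damping sign it carries, a mild solution is a solution of
`u + κ(φ(u)) = ρ(F)`, where `φ(x) = |x| ^ b * x` is increasing, `F` is the pair of data `(f, u₀)`,
and `κ`, `ρ` are potentials of the kernel `𝔤`. This kernel is positive because `exp (-t|ξ|^{2α})`
is the characteristic function of a stable law, a limit of normalised sums of Gaussian mixtures. The
potentials `κ`, `ρ` are the case `k = 0` of the damped potentials `r k`, `σ k` of
`∂_t + (-Δ)^α + k`, which satisfy the resolvent identities. If `φ` is truncated to a function with
Lipschitz constant `k`, then `x ↦ k x - φ(x)` is increasing, so for the truncated `φ` the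
equation becomes the fixed point problem `u = σ k F + r k (k u - φ(u))` for an order-preserving map.
Comparison gives `|u| ≤ ρ|F|`, independently of the truncation, and the truncation can be removed
by dominated convergence as soon as `φ(ρ|F|)` is integrable against the heat potential. The same
comparison shows that any two mild solutions agree, with no bound on their norm.

The bound `q > nb/(2α)` enters only in this integrability: the heat flow maps `L^q` to `L^r`,
`r = max q (b + 1)`, with a loss of `t ^ (-n/(2α) * (1/q - 1/r))`, whose `r`-th power is integrable
near `t = 0` exactly when `n/(2α) * (r - q)/q < 1`; hence `(ρ|F|) ^ r` is integrable on
`(0, T] × ℝ^n` for every `T`.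
-/

section

open Filter Topology ProbabilityTheory
open scoped RealInnerProductSpace NNReal

section StableLaw

variable {E : Type*} [NormedAddCommGroup E] [InnerProductSpace ℝ E] [FiniteDimensional ℝ E]
  [MeasurableSpace E] [BorelSpace E]

theorem exists_probabilityMeasure_charFun_eq {μ : ℕ → ProbabilityMeasure E} {φ : E → ℂ}
    (hφ : ContinuousAt φ 0)
    (h : ∀ ξ, Tendsto (fun k ↦ charFun (μ k : Measure E) ξ) atTop (𝓝 (φ ξ))) :
    ∃ ν : ProbabilityMeasure E, charFun (ν : Measure E) = φ := by
  have htight : IsTightMeasureSet {(ν : Measure E) | ν ∈ range μ} := by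
    have := isTightMeasureSet_of_tendsto_charFun hφ h
    simpa only [mem_range, exists_exists_eq_and] using! this
  obtain ⟨ν, -, s, hs, hν⟩ := (isCompact_closure_of_isTightMeasureSet htight).tendsto_subseq
    fun k ↦ subset_closure (mem_range_self (f := μ) k)
  exact ⟨ν, funext fun ξ ↦ tendsto_nhds_unique
    (ProbabilityMeasure.tendsto_iff_tendsto_charFun.1 hν ξ) ((h ξ).comp hs.tendsto_atTop)⟩

theorem exists_charFun_eq_pow (μ : ProbabilityMeasure E) (k : ℕ) :
    ∃ ν : ProbabilityMeasure E, ∀ ξ, charFun (ν : Measure E) ξ = charFun (μ : Measure E) ξ ^ k := by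
  induction k with
  | zero => exact ⟨⟨Measure.dirac 0, inferInstance⟩, fun ξ ↦ by simp⟩
  | succ k ih =>
    obtain ⟨ν, hν⟩ := ih
    exact ⟨⟨(ν : Measure E) ∗ μ, inferInstance⟩, fun ξ ↦ by simp [charFun_conv, hν, pow_succ]⟩

theorem integrableOn_one_sub_exp_neg_mul_rpow {r : ℝ} (hr : 1 < r) {σ : ℝ} (hσ : 0 ≤ σ) :
    IntegrableOn (fun v : ℝ ↦ 1 - Real.exp (-(σ * v ^ (-r)))) (Ioi 0) := by
  have hmeas : Measurable fun v : ℝ ↦ 1 - Real.exp (-(σ * v ^ (-r))) := by fun_prop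
  have hnonneg : ∀ v : ℝ, 0 < v → 0 ≤ σ * v ^ (-r) := fun v hv ↦ by positivity
  rw [← Ioc_union_Ioi_eq_Ioi zero_le_one]
  refine IntegrableOn.union ?_ ?_
  · refine Measure.integrableOn_of_bounded (M := 1) (by simp) hmeas.aestronglyMeasurable
      ((ae_restrict_iff' measurableSet_Ioc).2 (Eventually.of_forall fun v hv ↦ ?_))
    have := Real.exp_le_one_iff.2 (neg_nonpos.2 (hnonneg v hv.1))
    rw [Real.norm_eq_abs, abs_le]
    constructor <;> linarith [Real.exp_pos (-(σ * v ^ (-r)))]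
  · refine ((integrableOn_Ioi_rpow_of_lt (neg_lt_neg hr) one_pos).const_mul σ).mono'
      hmeas.aestronglyMeasurable
      ((ae_restrict_iff' measurableSet_Ioi).2 (Eventually.of_forall fun v hv ↦ ?_))
    have hv := hnonneg v (one_pos.trans hv)
    have := Real.exp_le_one_iff.2 (neg_nonpos.2 hv)
    rw [Real.norm_eq_abs, abs_le]
    constructor <;> linarith [Real.one_sub_le_exp_neg (σ * v ^ (-r))]

theorem integral_one_sub_exp_neg_mul_rpow_pos {r : ℝ} (hr : 1 < r) {σ : ℝ} (hσ : 0 < σ) :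
    0 < ∫ v in Ioi (0 : ℝ), (1 - Real.exp (-(σ * v ^ (-r)))) := by
  have hpos : ∀ v ∈ Ioi (0 : ℝ), 0 < 1 - Real.exp (-(σ * v ^ (-r))) := fun v hv ↦ by
    rw [sub_pos, Real.exp_lt_one_iff, neg_lt_zero]
    exact mul_pos hσ (Real.rpow_pos_of_pos hv _)
  rw [setIntegral_pos_iff_support_of_nonneg_ae ((ae_restrict_iff' measurableSet_Ioi).2
    (Eventually.of_forall fun v hv ↦ (hpos v hv).le))
    (integrableOn_one_sub_exp_neg_mul_rpow hr hσ.le),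
    inter_eq_right.2 fun v hv ↦ Function.mem_support.2 (hpos v hv).ne', Real.volume_Ioi]
  exact ENNReal.zero_lt_top

theorem integral_one_sub_exp_neg_mul_rpow {r : ℝ} (hr : 0 < r) {σ : ℝ} (hσ : 0 ≤ σ) :
    ∫ v in Ioi (0 : ℝ), (1 - Real.exp (-(σ * v ^ (-r))))
      = σ ^ r⁻¹ * ∫ v in Ioi (0 : ℝ), (1 - Real.exp (-(1 * v ^ (-r)))) := by
  rcases hσ.eq_or_lt with rfl | hσ
  · simp [Real.zero_rpow (inv_ne_zero hr.ne')]
  have hτ : 0 < σ ^ (-r⁻¹) := Real.rpow_pos_of_pos hσ _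
  have h := integral_comp_mul_left_Ioi (fun v ↦ 1 - Real.exp (-(1 * v ^ (-r)))) 0 hτ
  rw [mul_zero, smul_eq_mul, ← Real.rpow_neg hσ.le, neg_neg] at h
  rw [← h]
  refine setIntegral_congr_fun measurableSet_Ioi fun v hv ↦ ?_
  rw [Real.mul_rpow hτ.le (mem_Ioi.1 hv).le, ← Real.rpow_mul hσ.le, neg_mul_neg,
    inv_mul_cancel₀ hr.ne', Real.rpow_one, one_mul]

variable (E) in
/-- The law of `√(2 v⁻ʳ) G`, with `v` uniform on `(0, 1]` and `G` standard Gaussian: an isotropic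
law with a heavy tail of index `2 / r`, hence in the domain of attraction of the stable law. -/
def gaussianMixture (r : ℝ) : Measure E :=
  ((volume.restrict (Ioc (0 : ℝ) 1)).prod (stdGaussian E)).map
    fun z ↦ √(2 * z.1 ^ (-r)) • z.2

instance isProbabilityMeasure_gaussianMixture (r : ℝ) :
    IsProbabilityMeasure (gaussianMixture E r) := by
  have : IsProbabilityMeasure (volume.restrict (Ioc (0 : ℝ) 1)) := ⟨by simp⟩
  exact Measure.isProbabilityMeasure_map (by fun_prop)

theorem charFun_gaussianMixture (r : ℝ) (ξ : E) :
    charFun (gaussianMixture E r) ξ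
      = 1 - ((∫ v in (0 : ℝ)..1, (1 - Real.exp (-(‖ξ‖ ^ 2 * v ^ (-r)))) : ℝ) : ℂ) := by
  have hcond : ∀ v ∈ Ioc (0 : ℝ) 1,
      charFun (stdGaussian E) (√(2 * v ^ (-r)) • ξ) = Real.exp (-(‖ξ‖ ^ 2 * v ^ (-r))) := by
    intro v hv
    have : 0 ≤ 2 * v ^ (-r) := by have := hv.1; positivity
    rw [charFun_stdGaussian, norm_smul, Real.norm_of_nonneg (Real.sqrt_nonneg _)]
    norm_cast
    rw [mul_pow, Real.sq_sqrt this]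
    ring_nf
  have hint : IntegrableOn (fun v : ℝ ↦ Real.exp (-(‖ξ‖ ^ 2 * v ^ (-r)))) (Ioc 0 1) := by
    refine Measure.integrableOn_of_bounded (M := 1) (by simp)
      (Measurable.aestronglyMeasurable (by fun_prop))
      ((ae_restrict_iff' measurableSet_Ioc).2 (Eventually.of_forall fun v hv ↦ ?_))
    have := hv.1
    rw [Real.norm_of_nonneg (Real.exp_pos _).le, Real.exp_le_one_iff, neg_nonpos]
    positivity
  have hprob : IsProbabilityMeasure (volume.restrict (Ioc (0 : ℝ) 1)) := ⟨by simp⟩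
  have hbdd : Integrable (fun z : ℝ × E ↦
      Complex.exp ((⟪√(2 * z.1 ^ (-r)) • z.2, ξ⟫ : ℝ) * Complex.I))
      ((volume.restrict (Ioc (0 : ℝ) 1)).prod (stdGaussian E)) :=
    Integrable.of_bound (Measurable.aestronglyMeasurable (by fun_prop)) 1
      (Eventually.of_forall fun z ↦ (Complex.norm_exp_ofReal_mul_I _).le)
  calc charFun (gaussianMixture E r) ξ
      = ∫ v in Ioc (0 : ℝ) 1, charFun (stdGaussian E) (√(2 * v ^ (-r)) • ξ) := by
        rw [charFun_apply, gaussianMixture, integral_map (by fun_prop)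
          (Measurable.aestronglyMeasurable (by fun_prop)), integral_prod _ hbdd]
        simp_rw [charFun_apply, real_inner_smul_left, real_inner_smul_right]
    _ = ((∫ v in Ioc (0 : ℝ) 1, Real.exp (-(‖ξ‖ ^ 2 * v ^ (-r))) : ℝ) : ℂ) := by
        rw [setIntegral_congr_fun measurableSet_Ioc hcond, integral_complex_ofReal]
    _ = _ := by
        rw [intervalIntegral.integral_of_le zero_le_one, integral_sub (integrable_const 1) hint]
        simp

theorem tendsto_charFun_gaussianMixture_pow {r : ℝ} (hr : 1 < r) (ξ : E) :
    Tendsto (fun k : ℕ ↦ charFun (gaussianMixture E r) ((k : ℝ) ^ (-(r / 2)) • ξ) ^ k) atTop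
      (𝓝 (Real.exp (-∫ v in Ioi (0 : ℝ), (1 - Real.exp (-(‖ξ‖ ^ 2 * v ^ (-r))))) : ℂ)) := by
  set L : ℝ → ℝ := fun v ↦ 1 - Real.exp (-(‖ξ‖ ^ 2 * v ^ (-r))) with hL
  have hscale : ∀ k : ℕ, (k : ℝ) *
      ∫ v in (0 : ℝ)..1, (1 - Real.exp (-(‖(k : ℝ) ^ (-(r / 2)) • ξ‖ ^ 2 * v ^ (-r))))
        = ∫ v in (0 : ℝ)..k, L v := by
    intro k
    have hk : (0 : ℝ) ≤ k := k.cast_nonneg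
    have hsub := intervalIntegral.smul_integral_comp_mul_left (a := 0) (b := 1) L (k : ℝ)
    rw [mul_zero, mul_one, smul_eq_mul] at hsub
    rw [← hsub, intervalIntegral.integral_of_le zero_le_one,
      intervalIntegral.integral_of_le zero_le_one]
    congr 1
    refine setIntegral_congr_fun measurableSet_Ioc fun v hv ↦ ?_
    rw [hL, norm_smul, Real.norm_of_nonneg (by positivity), mul_pow, ← Real.rpow_natCast (_ ^ _),
      ← Real.rpow_mul hk, Nat.cast_ofNat, neg_mul, div_mul_cancel₀ _ two_ne_zero]
    simp only
    rw [Real.mul_rpow hk hv.1.le]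
    ring_nf
  have hlim : Tendsto (fun k : ℕ ↦ ∫ v in (0 : ℝ)..k, L v) atTop (𝓝 (∫ v in Ioi (0 : ℝ), L v)) :=
    intervalIntegral_tendsto_integral_Ioi 0
      (integrableOn_one_sub_exp_neg_mul_rpow hr (sq_nonneg _)) tendsto_natCast_atTop_atTop
  rw [Complex.ofReal_exp, Complex.ofReal_neg]
  simp_rw [charFun_gaussianMixture, sub_eq_add_neg (1 : ℂ)]
  refine Complex.tendsto_one_add_pow_exp_of_tendsto ?_
  simp_rw [mul_neg, ← Complex.ofReal_natCast, ← Complex.ofReal_mul, hscale]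
  exact ((Complex.continuous_ofReal.tendsto _).comp hlim).neg

variable (E) in
theorem exists_charFun_eq_exp_neg_mul_of_lt_one {a : ℝ} (ha : 0 < a) (ha' : a < 1) :
    ∃ c > 0, ∃ ν : ProbabilityMeasure E,
      ∀ ξ, charFun (ν : Measure E) ξ = Real.exp (-c * ‖ξ‖ ^ (2 * a)) := by
  have hr : 1 < a⁻¹ := (one_lt_inv₀ ha).2 ha'
  refine ⟨_, integral_one_sub_exp_neg_mul_rpow_pos hr one_pos, ?_⟩
  set c := ∫ v in Ioi (0 : ℝ), (1 - Real.exp (-(1 * v ^ (-a⁻¹)))) with hc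
  choose μ hμ using fun k : ℕ ↦ exists_charFun_eq_pow (E := E)
    ⟨(gaussianMixture E a⁻¹).map (((k : ℝ) ^ (-(a⁻¹ / 2))) • ·),
      Measure.isProbabilityMeasure_map (by fun_prop)⟩ k
  obtain ⟨ν, hν⟩ := exists_probabilityMeasure_charFun_eq (μ := μ)
    (φ := fun ξ ↦ (Real.exp (-c * ‖ξ‖ ^ (2 * a)) : ℂ))
    (Continuous.continuousAt (by fun_prop (disch := positivity))) fun ξ ↦ by
      have h := tendsto_charFun_gaussianMixture_pow hr ξ
      rw [integral_one_sub_exp_neg_mul_rpow (one_pos.trans hr) (sq_nonneg _), inv_inv, ← hc,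
        ← Real.rpow_natCast, ← Real.rpow_mul (norm_nonneg ξ), Nat.cast_ofNat, mul_comm,
        ← neg_mul] at h
      simpa only [hμ, ProbabilityMeasure.coe_mk, charFun_map_smul] using h
  exact ⟨ν, fun ξ ↦ congrFun hν ξ⟩

variable (E) in
theorem exists_charFun_eq_exp_neg_mul_norm_rpow {a t : ℝ} (ha : 0 < a) (ha' : a ≤ 1) (ht : 0 ≤ t) :
    ∃ ν : ProbabilityMeasure E,
      ∀ ξ, charFun (ν : Measure E) ξ = Real.exp (-t * ‖ξ‖ ^ (2 * a)) := by
  obtain ⟨c, hc, ν, hν⟩ : ∃ c > 0, ∃ ν : ProbabilityMeasure E,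
      ∀ ξ, charFun (ν : Measure E) ξ = Real.exp (-c * ‖ξ‖ ^ (2 * a)) := by
    rcases ha'.lt_or_eq with ha' | rfl
    · exact exists_charFun_eq_exp_neg_mul_of_lt_one E ha ha'
    · refine ⟨1 / 2, one_half_pos, ⟨stdGaussian E, inferInstance⟩, fun ξ ↦ ?_⟩
      rw [ProbabilityMeasure.coe_mk, charFun_stdGaussian, mul_one, Real.rpow_two]
      push_cast
      ring_nf
  refine ⟨⟨(ν : Measure E).map (((t / c) ^ (2 * a)⁻¹) • ·),
    Measure.isProbabilityMeasure_map (by fun_prop)⟩, fun ξ ↦ ?_⟩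
  have htc : 0 ≤ t / c := by positivity
  rw [ProbabilityMeasure.coe_mk, charFun_map_smul, hν, norm_smul,
    Real.norm_of_nonneg (by positivity), Real.mul_rpow (by positivity) (norm_nonneg ξ),
    Real.rpow_inv_rpow htc (by positivity), ← mul_assoc, neg_mul, mul_div_cancel₀ _ hc.ne']

end StableLaw

section GaussianApproximation

variable {E : Type*} [NormedAddCommGroup E] [InnerProductSpace ℝ E]

/-- The Fourier transform of the Gaussian `ξ ↦ exp (-‖ξ‖² / c)`, an approximation of the identity
as `c → ∞`. -/
def gaussianApproxId (c : ℝ) (x : E) : ℝ :=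
  (Real.pi * c) ^ (Module.finrank ℝ E / 2 : ℝ) * Real.exp (-(Real.pi ^ 2 * c) * ‖x‖ ^ 2)

theorem gaussianApproxId_nonneg {c : ℝ} (hc : 0 ≤ c) (x : E) : 0 ≤ gaussianApproxId c x := by
  have := Real.pi_pos
  unfold gaussianApproxId
  positivity

variable [MeasurableSpace E] [BorelSpace E]

theorem measurable_gaussianApproxId (c : ℝ) : Measurable (gaussianApproxId (E := E) c) := by
  unfold gaussianApproxId
  fun_prop

variable [FiniteDimensional ℝ E]

theorem integral_cexp_gaussian_eq_gaussianApproxId {c : ℝ} (hc : 0 < c) (x : E) :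
    ∫ ξ : E, Complex.exp (-(c : ℂ)⁻¹ * ‖ξ‖ ^ 2 + (2 * Real.pi * Complex.I) * ⟪x, ξ⟫)
      = gaussianApproxId c x := by
  rw [GaussianFourier.integral_cexp_neg_mul_sq_norm_add (by simpa using hc), gaussianApproxId]
  have : (0 : ℝ) ≤ Real.pi * c := by positivity
  push_cast [Complex.ofReal_cpow this]
  rw [div_inv_eq_mul]
  congr 2
  rw [mul_pow, Complex.I_sq]
  field_simp
  ring

theorem integral_gaussianApproxId {c : ℝ} (hc : 0 < c) : ∫ x : E, gaussianApproxId c x = 1 := by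
  have hπc : 0 < Real.pi * c := by positivity
  simp_rw [gaussianApproxId]
  rw [integral_const_mul, GaussianFourier.integral_rexp_neg_mul_sq_norm (by positivity),
    ← Real.mul_rpow hπc.le (by positivity)]
  convert Real.one_rpow _
  field_simp

theorem lintegral_gaussianApproxId {c : ℝ} (hc : 0 < c) (y : E) :
    ∫⁻ x : E, ENNReal.ofReal (gaussianApproxId c (x - y)) = 1 := by
  rw [lintegral_sub_right_eq_self fun x : E ↦ ENNReal.ofReal (gaussianApproxId c x),
    ← ofReal_integral_eq_lintegral_ofReal
      (not_imp_comm.1 integral_undef (by simp [integral_gaussianApproxId hc]))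
      (Eventually.of_forall (gaussianApproxId_nonneg hc.le)),
    integral_gaussianApproxId hc, ENNReal.ofReal_one]

variable {ν : Measure E} [IsFiniteMeasure ν]

theorem integral_gaussian_smul_charFun {c : ℝ} (hc : 0 < c) (x : E) :
    ∫ ξ : E, Complex.exp (-(c : ℂ)⁻¹ * ‖ξ‖ ^ 2) •
        (Complex.exp ((2 * Real.pi * ⟪ξ, x⟫ : ℝ) * Complex.I) • charFun ν (-(2 * Real.pi) • ξ))
      = ((∫ y, gaussianApproxId c (x - y) ∂ν : ℝ) : ℂ) := by
  have hint : Integrable (Function.uncurry fun ξ y : E ↦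
      Complex.exp (-(c : ℂ)⁻¹ * ‖ξ‖ ^ 2 + (2 * Real.pi * Complex.I) * ⟪x - y, ξ⟫))
      (volume.prod ν) := by
    have hgauss : Integrable fun ξ : E ↦ Complex.exp (-(c : ℂ)⁻¹ * ‖ξ‖ ^ 2) := by
      simpa using GaussianFourier.integrable_cexp_neg_mul_sq_norm_add (V := E) (b := (c : ℂ)⁻¹)
        (by simpa using hc) 0 0
    refine (hgauss.comp_fst ν).mono (Measurable.aestronglyMeasurable (by
      unfold Function.uncurry; fun_prop)) (Eventually.of_forall fun z ↦ le_of_eq ?_)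
    have hphase : (2 * Real.pi * Complex.I) * (⟪x - z.2, z.1⟫ : ℝ)
        = ((2 * Real.pi * ⟪x - z.2, z.1⟫ : ℝ) : ℂ) * Complex.I := by push_cast; ring
    simp only [Function.uncurry, Complex.exp_add, norm_mul, hphase, Complex.norm_exp_ofReal_mul_I,
      mul_one]
  calc _ = ∫ ξ : E, ∫ y,
        Complex.exp (-(c : ℂ)⁻¹ * ‖ξ‖ ^ 2 + (2 * Real.pi * Complex.I) * ⟪x - y, ξ⟫) ∂ν := by
        congr 1 with ξ
        rw [charFun_apply, ← integral_smul, ← integral_smul]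
        congr 1 with y
        simp only [smul_eq_mul, ← Complex.exp_add, real_inner_smul_right, inner_sub_left,
          real_inner_comm x ξ]
        congr 1
        push_cast
        ring
    _ = ∫ y, (∫ ξ : E,
        Complex.exp (-(c : ℂ)⁻¹ * ‖ξ‖ ^ 2 + (2 * Real.pi * Complex.I) * ⟪x - y, ξ⟫)) ∂ν :=
        integral_integral_swap hint
    _ = _ := by
        simp_rw [integral_cexp_gaussian_eq_gaussianApproxId hc]
        exact integral_complex_ofReal

theorem tendsto_integral_gaussianApproxId
    (hφ : Integrable fun ξ : E ↦ charFun ν (-(2 * Real.pi) • ξ)) (x : E) :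
    Tendsto (fun k : ℕ ↦ ((∫ y, gaussianApproxId (k + 1) (x - y) ∂ν : ℝ) : ℂ)) atTop
      (𝓝 (𝓕⁻ (fun ξ : E ↦ charFun ν (-(2 * Real.pi) • ξ)) x)) := by
  have h := (Real.tendsto_integral_cexp_sq_smul
    (f := fun ξ : E ↦ Complex.exp ((2 * Real.pi * ⟪ξ, x⟫ : ℝ) * Complex.I)
      • charFun ν (-(2 * Real.pi) • ξ)) ?_).comp
    (tendsto_atTop_add_const_right _ 1 tendsto_natCast_atTop_atTop)
  · rw [Real.fourierInv_eq']
    refine h.congr fun k ↦ ?_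
    simp only [Function.comp_apply]
    exact_mod_cast integral_gaussian_smul_charFun (ν := ν) (k.cast_add_one_pos (α := ℝ)) x
  · have hphase : Continuous fun ξ : E ↦
        Complex.exp ((2 * Real.pi * ⟪ξ, x⟫ : ℝ) * Complex.I) := by fun_prop
    refine hφ.mono (hphase.aestronglyMeasurable.smul hφ.1) (Eventually.of_forall fun ξ ↦ ?_)
    rw [norm_smul, Complex.norm_exp_ofReal_mul_I, one_mul]

open scoped ComplexOrder in
theorem fourierInv_charFun_nonneg
    (hφ : Integrable fun ξ : E ↦ charFun ν (-(2 * Real.pi) • ξ)) (x : E) :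
    0 ≤ 𝓕⁻ (fun ξ : E ↦ charFun ν (-(2 * Real.pi) • ξ)) x :=
  ge_of_tendsto' (tendsto_integral_gaussianApproxId hφ x) fun k ↦ Complex.zero_le_real.2
    (integral_nonneg fun y ↦ gaussianApproxId_nonneg (by positivity) _)

theorem lintegral_fourierInv_charFun_le
    (hφ : Integrable fun ξ : E ↦ charFun ν (-(2 * Real.pi) • ξ)) :
    ∫⁻ x, ‖𝓕⁻ (fun ξ : E ↦ charFun ν (-(2 * Real.pi) • ξ)) x‖ₑ ≤ ν univ := by
  have hmeas (c : ℝ) : Measurable fun z : E × E ↦ gaussianApproxId c (z.1 - z.2) :=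
    (measurable_gaussianApproxId c).comp (by fun_prop)
  have hmass (k : ℕ) :
      ∫⁻ x, ‖((∫ y, gaussianApproxId (k + 1) (x - y) ∂ν : ℝ) : ℂ)‖ₑ ≤ ν univ := by
    calc _ ≤ ∫⁻ x, ∫⁻ y, ENNReal.ofReal (gaussianApproxId (k + 1) (x - y)) ∂ν := by
          gcongr with x
          rw [← integral_complex_ofReal]
          refine (enorm_integral_le_lintegral_enorm _).trans_eq ?_
          congr 1 with y
          rw [← ofReal_norm, Complex.norm_real, Real.norm_of_nonneg
            (gaussianApproxId_nonneg (by positivity) _)]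
      _ = ∫⁻ y, (∫⁻ x, ENNReal.ofReal (gaussianApproxId (k + 1) (x - y))) ∂ν :=
          lintegral_lintegral_swap (hmeas _).ennreal_ofReal.aemeasurable
      _ = ν univ := by
          simp_rw [lintegral_gaussianApproxId (show (0 : ℝ) < (k : ℝ) + 1 by positivity)]
          simp
  calc _ = ∫⁻ x, liminf (fun k : ℕ ↦
          ‖((∫ y, gaussianApproxId (k + 1) (x - y) ∂ν : ℝ) : ℂ)‖ₑ) atTop := by
        congr 1 with x
        exact ((tendsto_integral_gaussianApproxId hφ x).enorm.liminf_eq).symm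
    _ ≤ _ := lintegral_liminf_le fun k ↦ by
        have := StronglyMeasurable.integral_prod_right (ν := ν)
          (f := fun x y ↦ gaussianApproxId (k + 1) (x - y)) (hmeas (k + 1)).stronglyMeasurable
        exact (Complex.measurable_ofReal.comp this.measurable).enorm
    _ ≤ ν univ := liminf_le_of_frequently_le' (Eventually.of_forall hmass).frequently

end GaussianApproximation

section FractionalHeatKernel

/-- The Fourier multiplier `exp (-t‖ξ‖^{2α})` of the fractional heat semigroup. -/
def heatSymbol (n : ℕ) (α t : ℝ) (ξ : Rn n) : ℂ := Real.exp (-t * ‖ξ‖ ^ (2 * α))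

variable {n : ℕ} {α s t : ℝ}

theorem continuous_heatSymbol (hα : 0 < α) : Continuous (heatSymbol n α t) := by
  unfold heatSymbol
  fun_prop (disch := positivity)

theorem norm_heatSymbol (ξ : Rn n) : ‖heatSymbol n α t ξ‖ = Real.exp (-t * ‖ξ‖ ^ (2 * α)) := by
  rw [heatSymbol, Complex.norm_real, Real.norm_of_nonneg (Real.exp_pos _).le]

theorem heatSymbol_mul_heatSymbol (ξ : Rn n) :
    heatSymbol n α s ξ * heatSymbol n α t ξ = heatSymbol n α (s + t) ξ := by
  simp only [heatSymbol, ← Complex.ofReal_mul, ← Real.exp_add]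
  ring_nf

theorem integrable_heatSymbol (hα : 0 < α) (ht : 0 < t) : Integrable (heatSymbol n α t) := by
  refine Integrable.ofReal ?_
  rcases subsingleton_or_nontrivial (Rn n) with _ | _
  · exact Integrable.of_finite
  have h := integrableOn_rpow_mul_exp_neg_mul_rpow (p := 2 * α)
    (s := ((Module.finrank ℝ (Rn n) - 1 : ℕ) : ℝ))
    (neg_one_lt_zero.trans_le (Nat.cast_nonneg _)) (by positivity) ht
  refine (integrable_fun_norm_addHaar (E := Rn n) (μ := volume)
    (f := fun r : ℝ ↦ Real.exp (-t * r ^ (2 * α)))).2 ?_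
  simpa only [Real.rpow_natCast, smul_eq_mul] using h

theorem exists_charFun_eq_heatSymbol (hα : 0 < α ∧ α ≤ 1) (ht : 0 ≤ t) :
    ∃ ν : ProbabilityMeasure (Rn n),
      (fun ξ ↦ charFun (ν : Measure (Rn n)) (-(2 * Real.pi) • ξ)) = heatSymbol n α t := by
  have hπ : 0 < 2 * Real.pi := Real.two_pi_pos
  obtain ⟨ν, hν⟩ := exists_charFun_eq_exp_neg_mul_norm_rpow (Rn n) hα.1 hα.2
    (t := t / (2 * Real.pi) ^ (2 * α)) (by positivity)
  refine ⟨ν, funext fun ξ ↦ ?_⟩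
  rw [hν, norm_smul, norm_neg, Real.norm_of_nonneg hπ.le, Real.mul_rpow hπ.le (norm_nonneg ξ),
    ← mul_assoc, neg_mul, div_mul_cancel₀ _ (Real.rpow_pos_of_pos hπ _).ne', heatSymbol]

open scoped ComplexOrder in
theorem fourierInv_heatSymbol_nonneg (hα : 0 < α ∧ α ≤ 1) (ht : 0 < t) (x : Rn n) :
    0 ≤ 𝓕⁻ (heatSymbol n α t) x := by
  obtain ⟨ν, hν⟩ := exists_charFun_eq_heatSymbol (n := n) hα ht.le
  rw [← hν]
  exact fourierInv_charFun_nonneg (hν ▸ integrable_heatSymbol hα.1 ht) x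

theorem gKer_nonneg (hα : 0 < α ∧ α ≤ 1) (ht : 0 < t) (x : Rn n) : 0 ≤ gKer n α t x :=
  (Complex.nonneg_iff.1 (fourierInv_heatSymbol_nonneg hα ht x)).1

theorem ofReal_gKer (hα : 0 < α ∧ α ≤ 1) (ht : 0 < t) (x : Rn n) :
    (gKer n α t x : ℂ) = 𝓕⁻ (heatSymbol n α t) x :=
  Complex.ext rfl (Complex.nonneg_iff.1 (fourierInv_heatSymbol_nonneg hα ht x)).2

theorem enorm_gKer (hα : 0 < α ∧ α ≤ 1) (ht : 0 < t) (x : Rn n) :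
    ‖gKer n α t x‖ₑ = ENNReal.ofReal (gKer n α t x) :=
  Real.enorm_of_nonneg (gKer_nonneg hα ht x)

theorem measurable_gKer : Measurable (Function.uncurry (gKer n α)) := by
  have h : StronglyMeasurable (Function.uncurry fun (z : ℝ × Rn n) (ξ : Rn n) ↦
      Complex.exp ((2 * Real.pi * ⟪ξ, z.2⟫ : ℝ) * Complex.I) • heatSymbol n α z.1 ξ) := by
    unfold heatSymbol Function.uncurry
    exact Measurable.stronglyMeasurable (by fun_prop)
  convert Complex.measurable_re.comp (h.integral_prod_right (ν := volume)).measurable using 1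
  ext z
  exact congrArg Complex.re (Real.fourierInv_eq' (heatSymbol n α z.1) z.2)

theorem lintegral_gKer_le_one (hα : 0 < α ∧ α ≤ 1) (ht : 0 < t) :
    ∫⁻ x, ENNReal.ofReal (gKer n α t x) ≤ 1 := by
  obtain ⟨ν, hν⟩ := exists_charFun_eq_heatSymbol (n := n) hα ht.le
  calc ∫⁻ x, ENNReal.ofReal (gKer n α t x) = ∫⁻ x, ‖𝓕⁻ (heatSymbol n α t) x‖ₑ := by
        congr 1 with x
        rw [← ofReal_gKer hα ht, ← enorm_gKer hα ht, ← ofReal_norm, ← ofReal_norm,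
          Complex.norm_real]
    _ ≤ (ν : Measure (Rn n)) univ := by
        rw [← hν]
        exact lintegral_fourierInv_charFun_le (hν ▸ integrable_heatSymbol hα.1 ht)
    _ = 1 := measure_univ

theorem integrable_gKer (hα : 0 < α ∧ α ≤ 1) (ht : 0 < t) : Integrable (gKer n α t) := by
  refine ⟨measurable_gKer.of_uncurry_left.aestronglyMeasurable, ?_⟩
  rw [hasFiniteIntegral_iff_ofReal (Eventually.of_forall (gKer_nonneg hα ht))]
  exact (lintegral_gKer_le_one hα ht).trans_lt ENNReal.one_lt_top

theorem integral_norm_heatSymbol (hα : 0 < α) (ht : 0 < t) :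
    ∫ ξ, ‖heatSymbol n α t ξ‖
      = t ^ (-((n : ℝ) / (2 * α))) * ∫ ξ, ‖heatSymbol n α 1 ξ‖ := by
  have hr : 0 < t ^ (1 / (2 * α)) := by positivity
  have hscale (ξ : Rn n) : ‖heatSymbol n α 1 (t ^ (1 / (2 * α)) • ξ)‖ = ‖heatSymbol n α t ξ‖ := by
    rw [norm_heatSymbol, norm_heatSymbol, norm_smul, Real.norm_of_nonneg hr.le,
      Real.mul_rpow hr.le (norm_nonneg _), ← Real.rpow_mul ht.le,
      one_div_mul_cancel (by positivity), Real.rpow_one]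
    ring_nf
  have h := Measure.integral_comp_smul volume (fun ξ ↦ ‖heatSymbol n α 1 ξ‖) (t ^ (1 / (2 * α)))
  simp only [hscale, finrank_euclideanSpace_fin] at h
  rw [h, smul_eq_mul, abs_of_pos (by positivity), ← Real.rpow_natCast, ← Real.rpow_mul ht.le,
    ← Real.rpow_neg ht.le]
  ring_nf

theorem gKer_le (hα : 0 < α) (ht : 0 < t) (x : Rn n) :
    gKer n α t x ≤ t ^ (-((n : ℝ) / (2 * α))) * ∫ ξ, ‖heatSymbol n α 1 ξ‖ := by
  rw [← integral_norm_heatSymbol hα ht]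
  calc gKer n α t x ≤ ‖𝓕⁻ (heatSymbol n α t) x‖ := Complex.re_le_norm _
    _ ≤ ∫ ξ, ‖heatSymbol n α t ξ‖ := by
        rw [Real.fourierInv_eq']
        refine (norm_integral_le_integral_norm _).trans_eq ?_
        simp_rw [norm_smul, Complex.norm_exp_ofReal_mul_I, one_mul]

theorem fourier_gKer (hα : 0 < α ∧ α ≤ 1) (ht : 0 < t) :
    𝓕 (fun x : Rn n ↦ (gKer n α t x : ℂ)) = heatSymbol n α t := by
  have hinv : (fun x ↦ (gKer n α t x : ℂ)) = 𝓕⁻ (heatSymbol n α t) := funext (ofReal_gKer hα ht)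
  have hfour : 𝓕 (heatSymbol n α t) = fun x ↦ (gKer n α t (-x) : ℂ) := by
    ext x
    rw [ofReal_gKer hα ht, Real.fourierInv_eq_fourier_neg, neg_neg]
  rw [hinv]
  exact (continuous_heatSymbol hα.1).fourier_fourierInv_eq (integrable_heatSymbol hα.1 ht)
    (hfour ▸ (integrable_gKer hα ht).comp_neg.ofReal)

theorem continuous_gKer (hα : 0 < α ∧ α ≤ 1) (ht : 0 < t) : Continuous (gKer n α t) :=
  Complex.continuous_re.comp (VectorFourier.fourierIntegral_continuous (by fun_prop)
    (continuous_inner (𝕜 := ℝ)).neg (integrable_heatSymbol hα.1 ht))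

open scoped Convolution in
theorem gKer_convolution_gKer (hα : 0 < α ∧ α ≤ 1) (hs : 0 < s) (ht : 0 < t) :
    (fun x : Rn n ↦ (gKer n α s x : ℂ)) ⋆[ContinuousLinearMap.mul ℂ ℂ, volume]
      (fun x ↦ (gKer n α t x : ℂ)) = fun x ↦ (gKer n α (s + t) x : ℂ) := by
  have hs' : Integrable fun x : Rn n ↦ (gKer n α s x : ℂ) := (integrable_gKer hα hs).ofReal
  have ht' : Integrable fun x : Rn n ↦ (gKer n α t x : ℂ) := (integrable_gKer hα ht).ofReal
  set h := (fun x : Rn n ↦ (gKer n α s x : ℂ)) ⋆[ContinuousLinearMap.mul ℂ ℂ, volume]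
      (fun x ↦ (gKer n α t x : ℂ)) with hdef
  have hcont : Continuous h := by
    refine BddAbove.continuous_convolution_right_of_integrable _ ?_ hs'
      (Complex.continuous_ofReal.comp (continuous_gKer hα ht))
    refine ⟨t ^ (-((n : ℝ) / (2 * α))) * ∫ ξ, ‖heatSymbol n α 1 ξ‖, ?_⟩
    rintro - ⟨x, rfl⟩
    simpa only [Complex.norm_real, Real.norm_of_nonneg (gKer_nonneg hα ht x)]
      using gKer_le hα.1 ht x
  have hint : Integrable h := hs'.integrable_convolution _ ht'
  have hfour : 𝓕 h = heatSymbol n α (s + t) := by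
    ext ξ
    rw [hdef, Real.fourier_mul_convolution_eq hs' ht', fourier_gKer hα hs, fourier_gKer hα ht,
      heatSymbol_mul_heatSymbol]
  ext x
  rw [ofReal_gKer hα (add_pos hs ht), ← hfour, hcont.fourierInv_fourier_eq hint
    (hfour ▸ integrable_heatSymbol hα.1 (add_pos hs ht))]

theorem lintegral_gKer_mul_gKer (hα : 0 < α ∧ α ≤ 1) (hs : 0 < s) (ht : 0 < t) (x z : Rn n) :
    ∫⁻ y, ENNReal.ofReal (gKer n α s (x - y)) * ENNReal.ofReal (gKer n α t (y - z))
      = ENNReal.ofReal (gKer n α (s + t) (x - z)) := by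
  have hint : Integrable fun y ↦ gKer n α s y * gKer n α t (x - z - y) := by
    refine (integrable_gKer hα hs).mul_bdd (c := t ^ (-((n : ℝ) / (2 * α))) *
      ∫ ξ, ‖heatSymbol n α 1 ξ‖) (Continuous.aestronglyMeasurable ?_)
      (Eventually.of_forall fun y ↦ ?_)
    · exact (continuous_gKer hα ht).comp (by fun_prop)
    · rw [Real.norm_of_nonneg (gKer_nonneg hα ht _)]
      exact gKer_le hα.1 ht _
  calc _ = ∫⁻ y, ENNReal.ofReal (gKer n α s y * gKer n α t (x - z - y)) := by
        rw [← lintegral_sub_left_eq_self _ x]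
        congr 1 with y
        rw [ENNReal.ofReal_mul (gKer_nonneg hα hs _)]
        congr 3 <;> abel
    _ = ENNReal.ofReal (∫ y, gKer n α s y * gKer n α t (x - z - y)) :=
        (ofReal_integral_eq_lintegral_ofReal hint (Eventually.of_forall fun y ↦
          mul_nonneg (gKer_nonneg hα hs _) (gKer_nonneg hα ht _))).symm
    _ = _ := by
        congr 1
        have := congrFun (gKer_convolution_gKer (n := n) hα hs ht) (x - z)
        simp only [convolution_def, ContinuousLinearMap.mul_apply', ← Complex.ofReal_mul] at this
        exact_mod_cast integral_complex_ofReal.symm.trans this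

end FractionalHeatKernel

section Resolvent

variable {Z Y : Type*} [MeasurableSpace Z] [MeasurableSpace Y]

/-- A resolvent pair: formally, with a semigroup generated by `-A`, the kernels are `κ = A⁻¹`,
`r k = (A + k)⁻¹`, `ρ = A⁻¹B` and `σ k = (A + k)⁻¹B` for some `B`, linked by the resolvent
identities. It is the setting in which `u + κ(φ(u)) = ρ(F)` is solved for increasing `φ`. -/
structure IsResolventPair (κ : Kernel Z Z) (r : ℝ≥0 → Kernel Z Z) (ρ : Kernel Z Y)
    (σ : ℝ≥0 → Kernel Z Y) : Prop where
  left : ∀ k z, ρ z = σ k z + k • (ρ ∘ₖ r k) z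
  right : ∀ k z, ρ z = σ k z + k • (σ k ∘ₖ κ) z
  comp_le : ∀ z, ∃ c : ℝ≥0, (ρ ∘ₖ κ) z ≤ c • ρ z

theorem integral_add_smul_comp {κ : Kernel Z Z} {η : Kernel Z Y} {m : Measure Y} {z : Z}
    {k : ℝ≥0} (hk : k ≠ 0) {g : Y → ℝ} (hg : Integrable g (m + k • (η ∘ₖ κ) z)) :
    Integrable (fun x ↦ ∫ y, g y ∂η x) (κ z) ∧
      ∫ y, g y ∂(m + k • (η ∘ₖ κ) z) = ∫ y, g y ∂m + k * ∫ x, ∫ y, g y ∂η x ∂κ z := by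
  obtain ⟨hm, hc⟩ := integrable_add_measure.1 hg
  have hc' : Integrable g ((η ∘ₖ κ) z) :=
    (integrable_smul_measure (ENNReal.coe_ne_zero.2 hk) ENNReal.coe_ne_top).1 hc
  refine ⟨hc'.integral_comp, ?_⟩
  rw [integral_add_measure hm hc, integral_smul_nnreal_measure, Kernel.integral_comp hc',
    NNReal.smul_def, smul_eq_mul]

theorem abs_mul_sub_le {c w h : ℝ} (hc : 0 ≤ c) (hsign : 0 ≤ h * w) (hle : |h| ≤ c * |w|) :
    |c * w - h| ≤ c * |w| := by
  rw [← abs_of_nonneg hc, ← abs_mul, abs_of_nonneg hc]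
  refine sq_le_sq.1 ?_
  have : h ^ 2 ≤ c * (h * w) := by
    calc h ^ 2 = |h| * |h| := by rw [← sq_abs, sq]
      _ ≤ c * |w| * |h| := mul_le_mul_of_nonneg_right hle (abs_nonneg h)
      _ = c * (h * w) := by rw [mul_assoc, ← abs_mul, mul_comm w, abs_of_nonneg hsign]
  nlinarith [mul_nonneg hc hsign]

namespace IsResolventPair

variable {κ : Kernel Z Z} {r : ℝ≥0 → Kernel Z Z} {ρ : Kernel Z Y} {σ : ℝ≥0 → Kernel Z Y}
  {μ : Measure Z} {k : ℝ≥0}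

theorem le (H : IsResolventPair κ r ρ σ) (k : ℝ≥0) (z : Z) : σ k z ≤ ρ z := by
  rw [H.left k z]
  exact Measure.le_add_right le_rfl

theorem integral_left (H : IsResolventPair κ r ρ σ) (hk : k ≠ 0) {z : Z} {g : Y → ℝ}
    (hg : Integrable g (ρ z)) :
    Integrable (fun x ↦ ∫ y, g y ∂ρ x) (r k z) ∧
      ∫ y, g y ∂ρ z = ∫ y, g y ∂σ k z + k * ∫ x, ∫ y, g y ∂ρ x ∂r k z := by
  have h := integral_add_smul_comp hk (H.left k z ▸ hg)
  exact ⟨h.1, (congrArg (integral · g) (H.left k z)).trans h.2⟩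

theorem integral_right (H : IsResolventPair κ r ρ σ) (hk : k ≠ 0) {z : Z} {g : Y → ℝ}
    (hg : Integrable g (ρ z)) :
    Integrable (fun x ↦ ∫ y, g y ∂σ k x) (κ z) ∧
      ∫ y, g y ∂ρ z = ∫ y, g y ∂σ k z + k * ∫ x, ∫ y, g y ∂σ k x ∂κ z := by
  have h := integral_add_smul_comp hk (H.right k z ▸ hg)
  exact ⟨h.1, (congrArg (integral · g) (H.right k z)).trans h.2⟩

theorem integrable_integral (H : IsResolventPair κ r ρ σ) {z : Z} {g : Y → ℝ}
    (hg : Integrable g (ρ z)) : Integrable (fun x ↦ ∫ y, g y ∂ρ x) (κ z) := by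
  obtain ⟨c, hc⟩ := H.comp_le z
  exact (hg.smul_measure_nnreal.mono_measure hc).integral_comp

/-- Comparison principle: apply `κ` to the inequality and cancel `k κ (r k) W`. -/
theorem le_integral_of_le (Hκ : IsResolventPair κ r κ r) (H : IsResolventPair κ r ρ σ)
    (hac : ∀ᵐ z ∂μ, κ z ≪ μ) (hk : k ≠ 0) {W : Z → ℝ} {E : Y → ℝ}
    (hW : ∀ᵐ z ∂μ, Integrable W (κ z)) (hE : ∀ᵐ z ∂μ, Integrable E (ρ z))
    (hle : ∀ᵐ z ∂μ, W z ≤ ∫ y, E y ∂σ k z + k * ∫ x, W x ∂r k z) :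
    ∀ᵐ z ∂μ, W z ≤ ∫ y, E y ∂ρ z := by
  filter_upwards [hac, hW, hE, hle] with z hacz hWz hEz hz
  obtain ⟨hσ, eρ⟩ := H.integral_right hk hEz
  obtain ⟨hr, eκ⟩ := Hκ.integral_right hk hWz
  have hκ : ∫ x, W x ∂κ z
      ≤ ∫ x, ∫ y, E y ∂σ k x ∂κ z + k * ∫ x, ∫ y, W y ∂r k x ∂κ z := by
    rw [← integral_const_mul, ← integral_add hσ (hr.const_mul _)]
    exact integral_mono_ae hWz (hσ.add (hr.const_mul _)) (hacz.ae_le hle)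
  have hrW : ∫ x, W x ∂r k z ≤ ∫ x, ∫ y, E y ∂σ k x ∂κ z := by linarith
  linarith [mul_le_mul_of_nonneg_left hrW k.coe_nonneg]

theorem integrable_of_add_integral_eq (Hκ : IsResolventPair κ r κ r)
    (H : IsResolventPair κ r ρ σ) (hac : ∀ᵐ z ∂μ, κ z ≪ μ) {w h : Z → ℝ} {e : Y → ℝ}
    (hh : ∀ᵐ z ∂μ, Integrable h (κ z)) (he : ∀ᵐ z ∂μ, Integrable e (ρ z))
    (heq : ∀ᵐ z ∂μ, w z + ∫ x, h x ∂κ z = ∫ y, e y ∂ρ z) : ∀ᵐ z ∂μ, Integrable w (κ z) := by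
  filter_upwards [hac, hh, he] with z hacz hhz hez
  refine ((H.integrable_integral hez).sub (Hκ.integrable_integral hhz)).congr ?_
  filter_upwards [hacz.ae_le heq] with x hx using sub_eq_of_eq_add hx.symm

theorem eq_integral_of_add_integral_eq (Hκ : IsResolventPair κ r κ r)
    (H : IsResolventPair κ r ρ σ) (hac : ∀ᵐ z ∂μ, κ z ≪ μ) (hk : k ≠ 0) {w h : Z → ℝ} {e : Y → ℝ}
    (hh : ∀ᵐ z ∂μ, Integrable h (κ z)) (he : ∀ᵐ z ∂μ, Integrable e (ρ z))
    (heq : ∀ᵐ z ∂μ, w z + ∫ x, h x ∂κ z = ∫ y, e y ∂ρ z) :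
    ∀ᵐ z ∂μ, w z = ∫ y, e y ∂σ k z + ∫ x, (k * w x - h x) ∂r k z := by
  filter_upwards [hac, hh, he, heq, Hκ.integrable_of_add_integral_eq H hac hh he heq]
    with z hacz hhz hez hz hwz
  obtain ⟨iκ, eκ⟩ := Hκ.integral_left hk hhz
  obtain ⟨iρ, eρ⟩ := H.integral_left hk hez
  have hrw : ∫ x, w x ∂r k z = ∫ x, ∫ y, e y ∂ρ x ∂r k z - ∫ x, ∫ y, h y ∂κ x ∂r k z := by
    rw [← integral_sub iρ iκ]
    refine integral_congr_ae ?_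
    filter_upwards [((Measure.absolutelyContinuous_of_le (Hκ.le k z)).trans hacz).ae_le heq]
      with x hx using (sub_eq_of_eq_add hx.symm).symm
  rw [integral_sub ((hwz.mono_measure (Hκ.le k z)).const_mul _) (hhz.mono_measure (Hκ.le k z)),
    integral_const_mul, hrw]
  linear_combination hz + eρ - eκ

theorem add_integral_eq_of_eq_integral (Hκ : IsResolventPair κ r κ r)
    (H : IsResolventPair κ r ρ σ) (hac : ∀ᵐ z ∂μ, κ z ≪ μ) (hk : k ≠ 0) {w h : Z → ℝ} {e : Y → ℝ}
    (hw : ∀ᵐ z ∂μ, Integrable w (κ z)) (hh : ∀ᵐ z ∂μ, Integrable h (κ z))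
    (he : ∀ᵐ z ∂μ, Integrable e (ρ z))
    (heq : ∀ᵐ z ∂μ, w z = ∫ y, e y ∂σ k z + ∫ x, (k * w x - h x) ∂r k z) :
    ∀ᵐ z ∂μ, w z + ∫ x, h x ∂κ z = ∫ y, e y ∂ρ z := by
  filter_upwards [hac, hw, hh, he, heq] with z hacz hwz hhz hez hz
  obtain ⟨iσ, eρ⟩ := H.integral_right hk hez
  have hg : Integrable (fun x ↦ k * w x - h x) (κ z) := (hwz.const_mul k).sub hhz
  obtain ⟨ir, eκ⟩ := Hκ.integral_right hk hg
  have hκw : ∫ x, w x ∂κ z = ∫ x, ∫ y, e y ∂σ k x ∂κ z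
      + ∫ x, ∫ y, (k * w y - h y) ∂r k x ∂κ z := by
    rw [← integral_add iσ ir]
    exact integral_congr_ae (hacz.ae_le heq)
  rw [integral_sub (hwz.const_mul _) hhz, integral_const_mul] at eκ
  linear_combination hz - eρ - eκ + k * hκw

theorem abs_le_of_add_integral_eq (Hκ : IsResolventPair κ r κ r) (H : IsResolventPair κ r ρ σ)
    (hac : ∀ᵐ z ∂μ, κ z ≪ μ) (hk : k ≠ 0) {w h : Z → ℝ} {e : Y → ℝ}
    (hh : ∀ᵐ z ∂μ, Integrable h (κ z)) (he : ∀ᵐ z ∂μ, Integrable e (ρ z))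
    (heq : ∀ᵐ z ∂μ, w z + ∫ x, h x ∂κ z = ∫ y, e y ∂ρ z)
    (hsign : ∀ z, 0 ≤ h z * w z) (hle : ∀ z, |h z| ≤ k * |w z|) :
    ∀ᵐ z ∂μ, |w z| ≤ ∫ y, |e y| ∂ρ z := by
  have hw := Hκ.integrable_of_add_integral_eq H hac hh he heq
  refine Hκ.le_integral_of_le H hac hk (hw.mono fun _ h ↦ h.abs) (he.mono fun _ h ↦ h.abs) ?_
  filter_upwards [Hκ.eq_integral_of_add_integral_eq H hac hk hh he heq, hw] with z hz hwz
  rw [hz, ← integral_const_mul]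
  refine (abs_add_le _ _).trans (add_le_add abs_integral_le_integral_abs ?_)
  rw [← Real.norm_eq_abs]
  exact norm_integral_le_of_norm_le ((hwz.mono_measure (Hκ.le k z)).abs.const_mul _)
    (ae_of_all _ fun x ↦ abs_mul_sub_le k.coe_nonneg (hsign x) (hle x))

end IsResolventPair

/-- The map whose fixed points, for `g w = k * w - N w`, solve `u + κ(N(u)) = ρ(F)`; its
arguments stand for the resolvent kernels `r k` and `σ k`. -/
def resolventMap (r : Kernel Z Z) (σ : Kernel Z Y) (F : Y → ℝ) (g : ℝ → ℝ) (v : Z → ℝ) (z : Z) :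
    ℝ :=
  ∫ y, F y ∂σ z + ∫ x, g (v x) ∂r z

theorem measurable_resolventMap {r : Kernel Z Z} {σ : Kernel Z Y} [IsSFiniteKernel r]
    [IsSFiniteKernel σ] {F : Y → ℝ} {g : ℝ → ℝ} {v : Z → ℝ} (hF : Measurable F)
    (hg : Measurable g) (hv : Measurable v) : Measurable (resolventMap r σ F g v) :=
  hF.stronglyMeasurable.integral_kernel.measurable.add
    (hg.comp hv).stronglyMeasurable.integral_kernel.measurable

theorem exists_measurable_tendsto_of_ae_le_succ {μ : Measure Z} {U : ℕ → Z → ℝ} {B : Z → ℝ}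
    (hUm : ∀ j, Measurable (U j)) (hmono : ∀ j, U j ≤ᵐ[μ] U (j + 1)) (hB : ∀ j, U j ≤ᵐ[μ] B) :
    ∃ u : Z → ℝ, Measurable u ∧ ∀ᵐ z ∂μ, Tendsto (fun j ↦ U j z) atTop (𝓝 (u z)) := by
  refine measurable_limit_of_tendsto_metrizable_ae (fun j ↦ (hUm j).aemeasurable) ?_
  filter_upwards [ae_all_iff.2 hmono, ae_all_iff.2 hB] with z hz_mono hzB
  exact ⟨_, tendsto_atTop_ciSup (monotone_nat_of_le_succ hz_mono) ⟨_, forall_mem_range.2 hzB⟩⟩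

namespace IsResolventPair

variable {κ : Kernel Z Z} {r : ℝ≥0 → Kernel Z Z} {ρ : Kernel Z Y} {σ : ℝ≥0 → Kernel Z Y}
  {μ : Measure Z} {k : ℝ≥0} {F : Y → ℝ} {g : ℝ → ℝ}

theorem absolutelyContinuous (Hκ : IsResolventPair κ r κ r) (hac : ∀ᵐ z ∂μ, κ z ≪ μ) (k : ℝ≥0) :
    ∀ᵐ z ∂μ, r k z ≪ μ := by
  filter_upwards [hac] with z hz using (Measure.absolutelyContinuous_of_le (Hκ.le k z)).trans hz

theorem abs_resolventMap_le (H : IsResolventPair κ r ρ σ) (hac : ∀ᵐ z ∂μ, r k z ≪ μ) (hk : k ≠ 0)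
    (hF : ∀ᵐ z ∂μ, Integrable F (ρ z)) (hg : ∀ x, |g x| ≤ k * |x|) {v : Z → ℝ}
    (hv : ∀ᵐ z ∂μ, |v z| ≤ ∫ y, |F y| ∂ρ z) :
    ∀ᵐ z ∂μ, |resolventMap (r k) (σ k) F g v z| ≤ ∫ y, |F y| ∂ρ z := by
  filter_upwards [hac, hF] with z hacz hFz
  obtain ⟨hΛ, eΛ⟩ := H.integral_left hk hFz.abs
  rw [eΛ, ← integral_const_mul]
  refine (abs_add_le _ _).trans (add_le_add abs_integral_le_integral_abs ?_)
  rw [← Real.norm_eq_abs]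
  refine norm_integral_le_of_norm_le (hΛ.const_mul _) ?_
  filter_upwards [hacz.ae_le hv] with x hx
  exact (hg _).trans (mul_le_mul_of_nonneg_left hx k.coe_nonneg)

theorem integrable_comp (H : IsResolventPair κ r ρ σ) (hk : k ≠ 0) {z : Z} (hac : r k z ≪ μ)
    (hF : Integrable F (ρ z)) (hgc : Continuous g) (hg : ∀ x, |g x| ≤ k * |x|) {v : Z → ℝ}
    (hvm : Measurable v) (hv : ∀ᵐ z ∂μ, |v z| ≤ ∫ y, |F y| ∂ρ z) :
    Integrable (fun x ↦ g (v x)) (r k z) := by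
  refine ((H.integral_left hk hF.abs).1.const_mul k).mono'
    (hgc.measurable.comp hvm).aestronglyMeasurable ?_
  filter_upwards [hac.ae_le hv] with x hx
  exact (hg _).trans (mul_le_mul_of_nonneg_left hx k.coe_nonneg)

theorem resolventMap_mono (H : IsResolventPair κ r ρ σ) (hac : ∀ᵐ z ∂μ, r k z ≪ μ) (hk : k ≠ 0)
    (hF : ∀ᵐ z ∂μ, Integrable F (ρ z)) (hgc : Continuous g) (hg : ∀ x, |g x| ≤ k * |x|)
    (hmono : Monotone g) {v w : Z → ℝ} (hvm : Measurable v) (hwm : Measurable w)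
    (hv : ∀ᵐ z ∂μ, |v z| ≤ ∫ y, |F y| ∂ρ z) (hw : ∀ᵐ z ∂μ, |w z| ≤ ∫ y, |F y| ∂ρ z)
    (hvw : v ≤ᵐ[μ] w) :
    resolventMap (r k) (σ k) F g v ≤ᵐ[μ] resolventMap (r k) (σ k) F g w := by
  filter_upwards [hac, hF] with z hacz hFz
  refine add_le_add le_rfl (integral_mono_ae (H.integrable_comp hk hacz hFz hgc hg hvm hv)
    (H.integrable_comp hk hacz hFz hgc hg hwm hw) ?_)
  filter_upwards [hacz.ae_le hvw] with x hx using hmono hx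

theorem tendsto_resolventMap (H : IsResolventPair κ r ρ σ) (hac : ∀ᵐ z ∂μ, r k z ≪ μ)
    (hk : k ≠ 0) (hF : ∀ᵐ z ∂μ, Integrable F (ρ z)) (hgc : Continuous g)
    (hg : ∀ x, |g x| ≤ k * |x|) {U : ℕ → Z → ℝ} {u : Z → ℝ} (hUm : ∀ j, Measurable (U j))
    (hU : ∀ j, ∀ᵐ z ∂μ, |U j z| ≤ ∫ y, |F y| ∂ρ z)
    (hlim : ∀ᵐ z ∂μ, Tendsto (fun j ↦ U j z) atTop (𝓝 (u z))) :
    ∀ᵐ z ∂μ, Tendsto (fun j ↦ resolventMap (r k) (σ k) F g (U j) z) atTop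
      (𝓝 (resolventMap (r k) (σ k) F g u z)) := by
  filter_upwards [hac, hF] with z hacz hFz
  refine tendsto_const_nhds.add (tendsto_integral_of_dominated_convergence _
    (fun j ↦ (hgc.measurable.comp (hUm j)).aestronglyMeasurable)
    ((H.integral_left hk hFz.abs).1.const_mul k) (fun j ↦ ?_) ?_)
  · filter_upwards [hacz.ae_le (hU j)] with x hx
    exact (hg _).trans (mul_le_mul_of_nonneg_left hx k.coe_nonneg)
  · filter_upwards [hacz.ae_le hlim] with x hx using (hgc.tendsto _).comp hx

/-- The iteration starting from `-ρ|F|` increases and stays below `ρ|F|`. -/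
theorem exists_eq_resolventMap [∀ k, IsSFiniteKernel (r k)] [∀ k, IsSFiniteKernel (σ k)]
    [IsSFiniteKernel ρ] (H : IsResolventPair κ r ρ σ) (hac : ∀ᵐ z ∂μ, r k z ≪ μ) (hk : k ≠ 0)
    (hFm : Measurable F) (hF : ∀ᵐ z ∂μ, Integrable F (ρ z)) (hgc : Continuous g)
    (hg : ∀ x, |g x| ≤ k * |x|) (hmono : Monotone g) :
    ∃ u : Z → ℝ, Measurable u ∧ (∀ᵐ z ∂μ, |u z| ≤ ∫ y, |F y| ∂ρ z) ∧
      u =ᵐ[μ] resolventMap (r k) (σ k) F g u := by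
  set Φ := resolventMap (r k) (σ k) F g
  set U : ℕ → Z → ℝ := fun j ↦ Φ^[j] fun z ↦ -∫ y, |F y| ∂ρ z
  have hsucc (j : ℕ) : U (j + 1) = Φ (U j) := Function.iterate_succ_apply' ..
  have hUm (j : ℕ) : Measurable (U j) := by
    induction j with
    | zero => exact hFm.abs.stronglyMeasurable.integral_kernel.measurable.neg
    | succ j ih => exact hsucc j ▸ measurable_resolventMap hFm hgc.measurable ih
  have hU (j : ℕ) : ∀ᵐ z ∂μ, |U j z| ≤ ∫ y, |F y| ∂ρ z := by
    induction j with
    | zero =>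
      exact ae_of_all _ fun z ↦
        (abs_neg _).trans_le (abs_of_nonneg (integral_nonneg fun y ↦ abs_nonneg _)).le
    | succ j ih => exact hsucc j ▸ H.abs_resolventMap_le hac hk hF hg ih
  have hU_mono (j : ℕ) : U j ≤ᵐ[μ] U (j + 1) := by
    induction j with
    | zero => filter_upwards [hU 1] with z hz using (abs_le.1 hz).1
    | succ j ih =>
      rw [hsucc j, hsucc (j + 1)]
      exact H.resolventMap_mono hac hk hF hgc hg hmono (hUm j) (hUm _) (hU j) (hU _) ih
  obtain ⟨u, hum, hlim⟩ := exists_measurable_tendsto_of_ae_le_succ hUm hU_mono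
    fun j ↦ (hU j).mono fun _ h ↦ (abs_le.1 h).2
  refine ⟨u, hum, ?_, ?_⟩
  · filter_upwards [ae_all_iff.2 hU, hlim] with z hz hlimz
    exact le_of_tendsto' hlimz.abs hz
  · filter_upwards [hlim, H.tendsto_resolventMap hac hk hF hgc hg hUm hU hlim] with z hz hΦ
    refine tendsto_nhds_unique ((tendsto_add_atTop_iff_nat 1).2 hz) ?_
    simpa only [hsucc] using hΦ

end IsResolventPair

theorem mul_sub_mul_sub_nonneg {N : ℝ → ℝ} (hN : Monotone N) (x y : ℝ) :
    0 ≤ (N x - N y) * (x - y) := by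
  rcases le_total x y with h | h
  · exact mul_nonneg_of_nonpos_of_nonpos (sub_nonpos.2 (hN h)) (sub_nonpos.2 h)
  · exact mul_nonneg (sub_nonneg.2 (hN h)) (sub_nonneg.2 h)

theorem abs_le_sub_neg {φ : ℝ → ℝ} (hφ : Monotone φ) (hφ₀ : φ 0 = 0) {x a : ℝ} (h : |x| ≤ a) :
    |φ x| ≤ φ a - φ (-a) := by
  obtain ⟨h₁, h₂⟩ := abs_le.1 h
  have ha : 0 ≤ a := (abs_nonneg x).trans h
  have hpos : 0 ≤ φ a := hφ₀ ▸ hφ ha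
  have hneg : φ (-a) ≤ 0 := hφ₀ ▸ hφ (neg_nonpos.2 ha)
  exact abs_le.2 ⟨by linarith [hφ h₁], by linarith [hφ h₂]⟩

theorem abs_comp_clip_le {φ : ℝ → ℝ} (hφ : Monotone φ) (hφ₀ : φ 0 = 0) {m : ℝ} (hm : 0 ≤ m)
    (x : ℝ) : |φ (max (-m) (min m x))| ≤ |φ x| := by
  rcases le_total 0 x with hx | hx
  · rw [max_eq_right ((neg_nonpos.2 hm).trans (le_min hm hx))]
    have h₀ : 0 ≤ φ (min m x) := hφ₀ ▸ hφ (le_min hm hx)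
    exact abs_le_abs_of_nonneg h₀ (hφ (min_le_right m x))
  · rw [min_eq_right (hx.trans hm)]
    have h₀ : φ (max (-m) x) ≤ 0 := hφ₀ ▸ hφ (max_le (neg_nonpos.2 hm) hx)
    exact abs_le_abs_of_nonpos h₀ (hφ (le_max_right (-m) x))

theorem exists_lipschitz_truncation {φ : ℝ → ℝ} (hφ : Monotone φ) (hφ₀ : φ 0 = 0)
    (hL : LocallyLipschitz φ) {m : ℝ} (hm : 0 ≤ m) :
    ∃ (N : ℝ → ℝ) (K : ℝ≥0), Monotone N ∧ LipschitzWith K N ∧ (∀ x, |N x| ≤ |φ x|) ∧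
      ∀ x, |x| ≤ m → N x = φ x := by
  obtain ⟨K, hK⟩ := hL.locallyLipschitzOn.exists_lipschitzOnWith_of_compact
    (isCompact_Icc (a := -m) (b := m))
  have hclip : LipschitzWith 1 fun x : ℝ ↦ max (-m) (min m x) :=
    (LipschitzWith.id.const_min m).const_max (-m)
  have hmaps : MapsTo (fun x : ℝ ↦ max (-m) (min m x)) univ (Icc (-m) m) := fun x _ ↦
    ⟨le_max_left .., max_le (neg_le_self hm) (min_le_left ..)⟩
  refine ⟨fun x ↦ φ (max (-m) (min m x)), K,
    fun x y h ↦ hφ (max_le_max le_rfl (min_le_min le_rfl h)),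
    lipschitzOnWith_univ.1 (mul_one K ▸ hK.comp hclip.lipschitzOnWith hmaps),
    abs_comp_clip_le hφ hφ₀ hm, fun x hx ↦ ?_⟩
  dsimp only
  rw [min_eq_right (abs_le.1 hx).2, max_eq_right (abs_le.1 hx).1]

namespace IsResolventPair

variable {κ : Kernel Z Z} {r : ℝ≥0 → Kernel Z Z} {ρ : Kernel Z Y} {σ : ℝ≥0 → Kernel Z Y}
  {μ : Measure Z} {F : Y → ℝ}

theorem exists_solution_of_lipschitzWith [∀ k, IsSFiniteKernel (r k)]
    [∀ k, IsSFiniteKernel (σ k)] [IsSFiniteKernel ρ] (Hκ : IsResolventPair κ r κ r)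
    (H : IsResolventPair κ r ρ σ) (hac : ∀ᵐ z ∂μ, κ z ≪ μ) (hFm : Measurable F)
    (hF : ∀ᵐ z ∂μ, Integrable F (ρ z)) {N : ℝ → ℝ} {K : ℝ≥0} (hN : Monotone N) (hN₀ : N 0 = 0)
    (hK : LipschitzWith K N) :
    ∃ u : Z → ℝ, Measurable u ∧ (∀ᵐ z ∂μ, |u z| ≤ ∫ y, |F y| ∂ρ z) ∧
      (∀ᵐ z ∂μ, Integrable (fun x ↦ N (u x)) (κ z)) ∧
      ∀ᵐ z ∂μ, u z + ∫ x, N (u x) ∂κ z = ∫ y, F y ∂ρ z := by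
  have hk : K + 1 ≠ 0 := by positivity
  have hNle (x : ℝ) : |N x| ≤ (K + 1 : ℝ≥0) * |x| := by
    have h := hK.dist_le_mul x 0
    rw [hN₀, dist_zero_right, dist_zero_right, Real.norm_eq_abs, Real.norm_eq_abs] at h
    exact h.trans (mul_le_mul_of_nonneg_right (by simp) (abs_nonneg x))
  have hg (x : ℝ) : |(K + 1 : ℝ≥0) * x - N x| ≤ (K + 1 : ℝ≥0) * |x| :=
    abs_mul_sub_le (NNReal.coe_nonneg _)
      (by simpa only [hN₀, sub_zero] using mul_sub_mul_sub_nonneg hN x 0) (hNle x)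
  have hmono : Monotone fun x ↦ (K + 1 : ℝ≥0) * x - N x := fun x y hxy ↦ by
    have h := (le_abs_self _).trans (hK.dist_le_mul y x)
    rw [Real.dist_eq, abs_of_nonneg (sub_nonneg.2 hxy)] at h
    push_cast
    linarith
  obtain ⟨u, hum, hu, hfix⟩ := H.exists_eq_resolventMap (Hκ.absolutelyContinuous hac _) hk hFm hF
    ((continuous_const_mul _).sub hK.continuous) hg hmono
  have hu_int : ∀ᵐ z ∂μ, Integrable u (κ z) := by
    filter_upwards [hac, hF] with z hacz hFz
    exact (H.integrable_integral hFz.abs).mono' hum.aestronglyMeasurable (hacz.ae_le hu)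
  have hNu : ∀ᵐ z ∂μ, Integrable (fun x ↦ N (u x)) (κ z) := hu_int.mono fun z hz ↦
    (hz.abs.const_mul _).mono' (hK.continuous.measurable.comp hum).aestronglyMeasurable
      (ae_of_all _ fun x ↦ hNle (u x))
  exact ⟨u, hum, hu, hNu, Hκ.add_integral_eq_of_eq_integral H hac hk hu_int hNu hF hfix⟩

/-- The difference of the solutions for two nonlinearities `N` and `M` solves an equation with
damping `M u - M v` and right-hand side `κ(M u - N u)`. -/
theorem abs_sub_le_integral (Hκ : IsResolventPair κ r κ r) (hac : ∀ᵐ z ∂μ, κ z ≪ μ)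
    {N M : ℝ → ℝ} {K : ℝ≥0} (hM : Monotone M) (hK : LipschitzWith K M) {u v : Z → ℝ} {ψ : Z → ℝ}
    (hNu : ∀ᵐ z ∂μ, Integrable (fun x ↦ N (u x)) (κ z))
    (hMu : ∀ᵐ z ∂μ, Integrable (fun x ↦ M (u x)) (κ z))
    (hMv : ∀ᵐ z ∂μ, Integrable (fun x ↦ M (v x)) (κ z))
    (hu : ∀ᵐ z ∂μ, u z + ∫ x, N (u x) ∂κ z = ψ z)
    (hv : ∀ᵐ z ∂μ, v z + ∫ x, M (v x) ∂κ z = ψ z) :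
    ∀ᵐ z ∂μ, |u z - v z| ≤ ∫ x, |M (u x) - N (u x)| ∂κ z := by
  refine Hκ.abs_le_of_add_integral_eq Hκ hac (k := K + 1) (by positivity)
    (h := fun x ↦ M (u x) - M (v x)) ?_ ?_ ?_
    (fun z ↦ mul_sub_mul_sub_nonneg hM _ _) fun z ↦ (hK.dist_le_mul _ _).trans ?_
  · filter_upwards [hMu, hMv] with z h₁ h₂ using h₁.sub h₂
  · filter_upwards [hMu, hNu] with z h₁ h₂ using h₁.sub h₂
  · filter_upwards [hNu, hMu, hMv, hu, hv] with z h₁ h₂ h₃ h₄ h₅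
    rw [integral_sub h₂ h₃, integral_sub h₂ h₁]
    linarith
  · exact mul_le_mul_of_nonneg_right (by simp) (abs_nonneg _)

end IsResolventPair

theorem abs_truncation_sub_le {φ N M : ℝ → ℝ} (hφ : Monotone φ) (hφ₀ : φ 0 = 0) {j : ℝ}
    (hN : ∀ x, |N x| ≤ |φ x|) (hM : ∀ x, |M x| ≤ |φ x|) (hNj : ∀ x, |x| ≤ j → N x = φ x)
    (hMj : ∀ x, |x| ≤ j → M x = φ x) {ι : Type*} {Λ : ι → ℝ} {z : ι} {x : ℝ} (hx : |x| ≤ Λ z) :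
    |M x - N x| ≤ {z | j < Λ z}.indicator (fun z ↦ 2 * (φ (Λ z) - φ (-Λ z))) z := by
  have hφx := abs_le_sub_neg hφ hφ₀ hx
  by_cases hz : j < Λ z
  · rw [indicator_of_mem (show z ∈ {z | j < Λ z} from hz)]
    calc |M x - N x| ≤ |M x| + |N x| := norm_sub_le (M x) (N x)
      _ ≤ _ := by linarith [hN x, hM x]
  · rw [indicator_of_notMem (show z ∉ {z | j < Λ z} from hz),
      hNj x (hx.trans (not_lt.1 hz)), hMj x (hx.trans (not_lt.1 hz)), sub_self, abs_zero]

theorem tendsto_setIntegral_mul_lt {ν : Measure Z} {w h G : Z → ℝ} (hwm : Measurable w)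
    (hhm : Measurable h) (hw : ∀ x, 0 ≤ w x) (hzero : ∀ x, w x = 0 → h x ≤ 0)
    (hG : Integrable G ν) :
    Tendsto (fun j : ℕ ↦ ∫ x in {x | j * w x < h x}, G x ∂ν) atTop (𝓝 0) := by
  have hempty : ⋂ j : ℕ, {x | j * w x < h x} = ∅ := by
    refine eq_empty_of_forall_notMem fun x hx ↦ ?_
    have hx' (j : ℕ) : j * w x < h x := mem_iInter.1 hx j
    rcases (hw x).eq_or_lt' with h₀ | h₀
    · exact (hx' 0).not_ge (by simpa only [h₀, mul_zero] using hzero x h₀)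
    · obtain ⟨j, hj⟩ := exists_nat_ge (h x / w x)
      exact (hx' j).not_ge ((div_le_iff₀ h₀).1 hj)
  have hanti : Antitone fun j : ℕ ↦ {x | j * w x < h x} := fun i j hij x (hx : j * w x < h x) ↦
    (mul_le_mul_of_nonneg_right (Nat.cast_le.2 hij) (hw x)).trans_lt hx
  have hlim := tendsto_setIntegral_of_antitone (μ := ν) (f := G)
    (fun j : ℕ ↦ measurableSet_lt (hwm.const_mul _) hhm) hanti ⟨0, hG.integrableOn⟩
  rwa [hempty, setIntegral_empty] at hlim

theorem exists_measurable_tendsto_of_ae_abs_sub_le {μ : Measure Z} {v b : ℕ → Z → ℝ}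
    (hvm : ∀ j, Measurable (v j))
    (hv : ∀ n m j, j ≤ n → j ≤ m → ∀ᵐ z ∂μ, |v n z - v m z| ≤ b j z)
    (hb : ∀ᵐ z ∂μ, Tendsto (fun j ↦ b j z) atTop (𝓝 0)) :
    ∃ u : Z → ℝ, Measurable u ∧ ∀ᵐ z ∂μ, Tendsto (fun j ↦ v j z) atTop (𝓝 (u z)) := by
  refine measurable_limit_of_tendsto_metrizable_ae (fun j ↦ (hvm j).aemeasurable) ?_
  have hv' : ∀ᵐ z ∂μ, ∀ n m j, j ≤ n → j ≤ m → |v n z - v m z| ≤ b j z := by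
    simpa only [ae_all_iff] using hv
  filter_upwards [hv', hb] with z hvz hbz
  exact cauchySeq_tendsto_of_complete (cauchySeq_of_le_tendsto_0 _ hvz hbz)

namespace IsResolventPair

variable {κ : Kernel Z Z} {r : ℝ≥0 → Kernel Z Z} {ρ : Kernel Z Y} {σ : ℝ≥0 → Kernel Z Y}
  {μ : Measure Z} {F : Y → ℝ} {φ : ℝ → ℝ}

theorem exists_tendsto_truncated_solution (Hκ : IsResolventPair κ r κ r)
    (hac : ∀ᵐ z ∂μ, κ z ≪ μ) (hφ : Monotone φ) (hφ₀ : φ 0 = 0) {Λ ψ : Z → ℝ} (hΛ : Measurable Λ)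
    (hG : ∀ᵐ z ∂μ, Integrable (fun x ↦ φ (Λ x) - φ (-Λ x)) (κ z))
    {N : ℕ → ℝ → ℝ} {K : ℕ → ℝ≥0} (hN : ∀ m, Monotone (N m)) (hK : ∀ m, LipschitzWith (K m) (N m))
    (hNφ : ∀ m x, |N m x| ≤ |φ x|) (hNm : ∀ (m : ℕ) (x : ℝ), |x| ≤ m → N m x = φ x)
    {v : ℕ → Z → ℝ} (hvm : ∀ m, Measurable (v m)) (hv : ∀ m, ∀ᵐ z ∂μ, |v m z| ≤ Λ z)
    (heq : ∀ m, ∀ᵐ z ∂μ, v m z + ∫ x, N m (v m x) ∂κ z = ψ z) :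
    ∃ u : Z → ℝ, Measurable u ∧ ∀ᵐ z ∂μ, Tendsto (fun m ↦ v m z) atTop (𝓝 (u z)) := by
  have hint (n m : ℕ) : ∀ᵐ z ∂μ, Integrable (fun x ↦ N n (v m x)) (κ z) := by
    filter_upwards [hac, hG] with z hacz hGz
    refine hGz.mono' ((hK n).continuous.measurable.comp (hvm m)).aestronglyMeasurable ?_
    filter_upwards [hacz.ae_le (hv m)] with x hx
    exact (hNφ n _).trans (abs_le_sub_neg hφ hφ₀ hx)
  refine exists_measurable_tendsto_of_ae_abs_sub_le hvm
    (b := fun j z ↦ ∫ x in {x | (j : ℝ) < Λ x}, 2 * (φ (Λ x) - φ (-Λ x)) ∂κ z) ?_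
    (hG.mono fun z hGz ↦ by
      simpa only [mul_one] using tendsto_setIntegral_mul_lt measurable_const hΛ
        (fun _ ↦ zero_le_one) (fun _ h ↦ absurd h one_ne_zero) (hGz.const_mul 2))
  intro n m j hn hm
  filter_upwards [hac, hG, hint n n, hint m n,
    Hκ.abs_sub_le_integral hac (hN m) (hK m) (hint n n) (hint m n) (hint m m) (heq n) (heq m)]
    with z hacz hGz hnz hmz hz
  have hset : MeasurableSet {x | (j : ℝ) < Λ x} := measurableSet_lt measurable_const hΛ
  rw [← integral_indicator hset]
  refine hz.trans (integral_mono_ae (hmz.sub hnz).abs ((hGz.const_mul 2).indicator hset) ?_)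
  filter_upwards [hacz.ae_le (hv n)] with x hx
  exact abs_truncation_sub_le hφ hφ₀ (hNφ n) (hNφ m)
    (fun y hy ↦ hNm n y (hy.trans (Nat.cast_le.2 hn)))
    (fun y hy ↦ hNm m y (hy.trans (Nat.cast_le.2 hm))) hx

theorem exists_solution [∀ k, IsSFiniteKernel (r k)] [∀ k, IsSFiniteKernel (σ k)]
    [IsSFiniteKernel ρ] (Hκ : IsResolventPair κ r κ r) (H : IsResolventPair κ r ρ σ)
    (hac : ∀ᵐ z ∂μ, κ z ≪ μ) (hφ : Monotone φ) (hφ₀ : φ 0 = 0) (hL : LocallyLipschitz φ)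
    (hFm : Measurable F) (hF : ∀ᵐ z ∂μ, Integrable F (ρ z))
    (hG : ∀ᵐ z ∂μ, Integrable
      (fun x ↦ φ (∫ y, |F y| ∂ρ x) - φ (-∫ y, |F y| ∂ρ x)) (κ z)) :
    ∃ u : Z → ℝ, Measurable u ∧ (∀ᵐ z ∂μ, |u z| ≤ ∫ y, |F y| ∂ρ z) ∧
      (∀ᵐ z ∂μ, Integrable (fun x ↦ φ (u x)) (κ z)) ∧
      ∀ᵐ z ∂μ, u z + ∫ x, φ (u x) ∂κ z = ∫ y, F y ∂ρ z := by
  choose N K hN hK hNφ hNm using fun m : ℕ ↦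
    exists_lipschitz_truncation hφ hφ₀ hL (Nat.cast_nonneg (α := ℝ) m)
  have hN₀ (m : ℕ) : N m 0 = 0 := by simpa only [hφ₀, abs_zero, abs_nonpos_iff] using hNφ m 0
  choose v hvm hv _ heq using fun m : ℕ ↦
    Hκ.exists_solution_of_lipschitzWith H hac hFm hF (hN m) (hN₀ m) (hK m)
  obtain ⟨u, hum, hlim⟩ := Hκ.exists_tendsto_truncated_solution hac hφ hφ₀
    hFm.abs.stronglyMeasurable.integral_kernel.measurable hG hN hK hNφ hNm hvm hv heq
  have hu : ∀ᵐ z ∂μ, |u z| ≤ ∫ y, |F y| ∂ρ z := by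
    filter_upwards [ae_all_iff.2 hv, hlim] with z hvz hz using le_of_tendsto' hz.abs hvz
  have hNv : ∀ᵐ z ∂μ, Tendsto (fun m ↦ N m (v m z)) atTop (𝓝 (φ (u z))) := by
    filter_upwards [ae_all_iff.2 hv, hlim] with z hvz hz
    obtain ⟨m, hm⟩ := exists_nat_ge (∫ y, |F y| ∂ρ z)
    refine ((hL.continuous.tendsto _).comp hz).congr' ((eventually_ge_atTop m).mono fun j hj ↦ ?_)
    exact (hNm j _ ((hvz j).trans (hm.trans (Nat.cast_le.2 hj)))).symm
  have hφu : ∀ᵐ z ∂μ, Integrable (fun x ↦ φ (u x)) (κ z) := by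
    filter_upwards [hac, hG] with z hacz hGz
    refine hGz.mono' (hφ.measurable.comp hum).aestronglyMeasurable ?_
    filter_upwards [hacz.ae_le hu] with x hx using abs_le_sub_neg hφ hφ₀ hx
  refine ⟨u, hum, hu, hφu, ?_⟩
  filter_upwards [hac, hG, hlim, ae_all_iff.2 heq] with z hacz hGz hz heqz
  refine tendsto_nhds_unique (hz.add (tendsto_integral_of_dominated_convergence _
    (fun m ↦ ((hN m).measurable.comp (hvm m)).aestronglyMeasurable) hGz (fun m ↦ ?_)
    (hacz.ae_le hNv))) (tendsto_const_nhds.congr fun m ↦ (heqz m).symm)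
  filter_upwards [hacz.ae_le (hv m)] with x hx
  exact (hNφ m _).trans (abs_le_sub_neg hφ hφ₀ hx)

/-- Keeping the damping `h` only where `|h| ≤ j |w|` leaves an error `κ(h 1_{j |w| < |h|})`, which
bounds `|w|` and vanishes as `j → ∞`. -/
theorem eq_zero_of_add_integral_eq_zero (Hκ : IsResolventPair κ r κ r) (hac : ∀ᵐ z ∂μ, κ z ≪ μ)
    {w h : Z → ℝ} (hwm : Measurable w) (hhm : Measurable h)
    (hh : ∀ᵐ z ∂μ, Integrable h (κ z)) (heq : ∀ᵐ z ∂μ, w z + ∫ x, h x ∂κ z = 0)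
    (hsign : ∀ z, 0 ≤ h z * w z) (hzero : ∀ z, w z = 0 → h z = 0) : w =ᵐ[μ] 0 := by
  set S : ℕ → Set Z := fun j ↦ {z | j * |w z| < |h z|}
  have hS (j : ℕ) : MeasurableSet (S j) := measurableSet_lt (hwm.abs.const_mul _) hhm.abs
  have hle (j : ℕ) (hj : j ≠ 0) : ∀ᵐ z ∂μ, |w z| ≤ ∫ x in S j, |h x| ∂κ z := by
    have := Hκ.abs_le_of_add_integral_eq Hκ hac (k := j) (Nat.cast_ne_zero.2 hj)
      (w := w) (h := (S j)ᶜ.indicator h) (e := (S j).indicator fun x ↦ -h x)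
      (hh.mono fun z hz ↦ hz.indicator (hS j).compl) (hh.mono fun z hz ↦ hz.neg.indicator (hS j))
      ?_ (fun z ↦ ?_) fun z ↦ ?_
    · filter_upwards [this] with z hz
      rw [← integral_indicator (hS j)]
      simpa only [← Real.norm_eq_abs, norm_indicator_eq_indicator_norm, norm_neg] using hz
    · filter_upwards [heq, hh] with z hz hhz
      rw [integral_indicator (hS j), integral_indicator (hS j).compl, integral_neg,
        ← sub_eq_zero, ← hz, ← integral_add_compl (hS j) hhz]
      ring
    · by_cases hz : z ∈ S j
      · rw [indicator_of_notMem (notMem_compl_iff.2 hz), zero_mul]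
      · simpa only [indicator_of_mem (mem_compl hz)] using hsign z
    · by_cases hz : z ∈ S j
      · rw [indicator_of_notMem (notMem_compl_iff.2 hz), abs_zero]
        positivity
      · rw [indicator_of_mem (mem_compl hz), NNReal.coe_natCast]
        exact not_lt.1 hz
  have hle' : ∀ᵐ z ∂μ, ∀ j : ℕ, j ≠ 0 → |w z| ≤ ∫ x in S j, |h x| ∂κ z := by
    simpa only [ae_all_iff] using hle
  filter_upwards [hh, hle'] with z hhz hz
  have hlim := tendsto_setIntegral_mul_lt hwm.abs hhm.abs (fun x ↦ abs_nonneg (w x))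
    (fun x hx ↦ (abs_eq_zero.2 (hzero x (abs_eq_zero.1 hx))).le) hhz.abs
  exact abs_nonpos_iff.1 (ge_of_tendsto hlim ((eventually_ne_atTop 0).mono hz))

theorem ae_eq_of_add_integral_eq (Hκ : IsResolventPair κ r κ r) (hac : ∀ᵐ z ∂μ, κ z ≪ μ)
    (hφ : Monotone φ) {u v ψ : Z → ℝ} (hum : Measurable u) (hvm : Measurable v)
    (hφu : ∀ᵐ z ∂μ, Integrable (fun x ↦ φ (u x)) (κ z))
    (hφv : ∀ᵐ z ∂μ, Integrable (fun x ↦ φ (v x)) (κ z))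
    (hu : ∀ᵐ z ∂μ, u z + ∫ x, φ (u x) ∂κ z = ψ z)
    (hv : ∀ᵐ z ∂μ, v z + ∫ x, φ (v x) ∂κ z = ψ z) : u =ᵐ[μ] v := by
  have h := Hκ.eq_zero_of_add_integral_eq_zero hac (w := fun z ↦ u z - v z)
    (h := fun z ↦ φ (u z) - φ (v z)) (hum.sub hvm)
    ((hφ.measurable.comp hum).sub (hφ.measurable.comp hvm))
    (by filter_upwards [hφu, hφv] with z h₁ h₂ using h₁.sub h₂) ?_
    (fun z ↦ mul_sub_mul_sub_nonneg hφ _ _) fun z hz ↦ by rw [sub_eq_zero.1 hz, sub_self]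
  · filter_upwards [h] with z hz using sub_eq_zero.1 hz
  · filter_upwards [hφu, hφv, hu, hv] with z h₁ h₂ h₃ h₄
    rw [integral_sub h₁ h₂]
    linarith

end IsResolventPair

end Resolvent

section HeatPotential

variable {n : ℕ} {α : ℝ} {k : ℝ≥0} {z w y : ℝ × Rn n}

/-- The space-time density `e^{-k(t-s)} 𝔤_{t-s}^α(x - y)`, `s < t`, of the damped heat potential:
the Green function of `∂_t + (-Δ)^α + k`. -/
def heatDensity (n : ℕ) (α : ℝ) (k : ℝ≥0) (z w : ℝ × Rn n) : ℝ≥0∞ :=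
  if w.1 < z.1 then
    ENNReal.ofReal (Real.exp (-k * (z.1 - w.1))) *
      ENNReal.ofReal (gKer n α (z.1 - w.1) (z.2 - w.2))
  else 0

theorem heatDensity_of_le (h : z.1 ≤ w.1) : heatDensity n α k z w = 0 := if_neg h.not_gt

theorem heatDensity_zero_of_lt (h : w.1 < z.1) :
    heatDensity n α 0 z w = ENNReal.ofReal (gKer n α (z.1 - w.1) (z.2 - w.2)) := by
  rw [heatDensity, if_pos h, NNReal.coe_zero, neg_zero, zero_mul, Real.exp_zero,
    ENNReal.ofReal_one, one_mul]

theorem heatDensity_eq_exp_mul :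
    heatDensity n α k z w
      = ENNReal.ofReal (Real.exp (-k * (z.1 - w.1))) * heatDensity n α 0 z w := by
  rcases lt_or_ge w.1 z.1 with h | h
  · rw [heatDensity_zero_of_lt h, heatDensity, if_pos h]
  · rw [heatDensity_of_le h, heatDensity_of_le h, mul_zero]

theorem heatDensity_ne_top : heatDensity n α k z w ≠ ∞ := by
  unfold heatDensity
  split_ifs
  · exact ENNReal.mul_ne_top ENNReal.ofReal_ne_top ENNReal.ofReal_ne_top
  · exact ENNReal.zero_ne_top

theorem measurable_heatDensity : Measurable (Function.uncurry (heatDensity n α k)) := by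
  unfold Function.uncurry heatDensity
  refine Measurable.ite (measurableSet_lt (by fun_prop) (by fun_prop))
    (Measurable.mul (by fun_prop) (Measurable.ennreal_ofReal ?_)) measurable_const
  exact measurable_gKer.comp (f := fun p : (ℝ × Rn n) × (ℝ × Rn n) ↦
    (p.1.1 - p.2.1, p.1.2 - p.2.2)) (by fun_prop)

theorem heatDensity_add_one_sub_exp_mul :
    heatDensity n α k z w + ENNReal.ofReal (1 - Real.exp (-k * (z.1 - w.1))) * heatDensity n α 0 z w
      = heatDensity n α 0 z w := by
  rcases lt_or_ge w.1 z.1 with h | h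
  · have hexp : Real.exp (-k * (z.1 - w.1)) ≤ 1 := Real.exp_le_one_iff.2
      (mul_nonpos_of_nonpos_of_nonneg (neg_nonpos.2 k.2) (sub_nonneg.2 h.le))
    rw [heatDensity_eq_exp_mul (k := k), ← add_mul,
      ← ENNReal.ofReal_add (Real.exp_pos _).le (sub_nonneg.2 hexp), add_sub_cancel,
      ENNReal.ofReal_one, one_mul]
  · rw [heatDensity_of_le h, heatDensity_of_le h, mul_zero, add_zero]

theorem lintegral_heatDensity_right_le_one (hα : 0 < α ∧ α ≤ 1) (s : ℝ) :
    ∫⁻ x, heatDensity n α 0 z (s, x) ≤ 1 := by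
  rcases lt_or_ge s z.1 with h | h
  · simp only [heatDensity_zero_of_lt (w := (s, _)) h]
    rw [lintegral_sub_left_eq_self (fun x ↦ ENNReal.ofReal (gKer n α (z.1 - s) x)) z.2]
    exact lintegral_gKer_le_one hα (sub_pos.2 h)
  · simp only [heatDensity_of_le (w := (s, _)) h, lintegral_zero, zero_le]

theorem lintegral_heatDensity_mul_heatDensity (hα : 0 < α ∧ α ≤ 1) (s : ℝ) :
    ∫⁻ x, heatDensity n α 0 z (s, x) * heatDensity n α 0 (s, x) y
      = (Ioo y.1 z.1).indicator (fun _ ↦ heatDensity n α 0 z y) s := by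
  by_cases hs : s ∈ Ioo y.1 z.1
  · rw [indicator_of_mem hs, heatDensity_zero_of_lt (hs.1.trans hs.2)]
    simp only [heatDensity_zero_of_lt (w := (s, _)) hs.2, heatDensity_zero_of_lt (z := (s, _)) hs.1]
    rw [lintegral_gKer_mul_gKer hα (sub_pos.2 hs.2) (sub_pos.2 hs.1), sub_add_sub_cancel]
  · rw [indicator_of_notMem hs]
    refine (lintegral_congr fun x ↦ ?_).trans lintegral_zero
    rcases le_or_gt z.1 s with h | h
    · rw [heatDensity_of_le h, zero_mul]
    · rw [heatDensity_of_le (z := (s, x)) (not_lt.1 fun h' ↦ hs ⟨h', h⟩), mul_zero]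

theorem lintegral_damped_heatDensity_mul (hα : 0 < α ∧ α ≤ 1) (j k : ℝ≥0) (hy : 0 ≤ y.1) :
    ∫⁻ x, heatDensity n α j z x * heatDensity n α k x y ∂(volume.restrict (Ioi 0)).prod volume
      = (∫⁻ s in Ioo y.1 z.1,
        ENNReal.ofReal (Real.exp (-j * (z.1 - s))) * ENNReal.ofReal (Real.exp (-k * (s - y.1))))
        * heatDensity n α 0 z y := by
  have hm (l : ℝ≥0) (a : ℝ × Rn n) : Measurable (heatDensity n α l a) :=
    measurable_heatDensity.of_uncurry_left
  have hm' (l : ℝ≥0) (a : ℝ × Rn n) : Measurable fun x ↦ heatDensity n α l x a :=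
    measurable_heatDensity.of_uncurry_right
  rw [lintegral_prod _ ((hm j z).fun_mul (hm' k y)).aemeasurable]
  calc _ = ∫⁻ s in Ioi 0, (Ioo y.1 z.1).indicator (fun s ↦
        ENNReal.ofReal (Real.exp (-j * (z.1 - s))) * ENNReal.ofReal (Real.exp (-k * (s - y.1)))
          * heatDensity n α 0 z y) s := by
        refine lintegral_congr fun s ↦ ?_
        rw [indicator_mul_right, ← lintegral_heatDensity_mul_heatDensity hα,
          ← lintegral_const_mul]
        · refine lintegral_congr fun x ↦ ?_
          rw [heatDensity_eq_exp_mul (k := j), heatDensity_eq_exp_mul (k := k)]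
          exact mul_mul_mul_comm _ _ _ _
        · exact ((hm 0 z).comp measurable_prodMk_left).mul ((hm' 0 y).comp measurable_prodMk_left)
    _ = _ := by
        rw [lintegral_indicator measurableSet_Ioo, Measure.restrict_restrict measurableSet_Ioo,
          inter_eq_left.2 (Ioo_subset_Ioi_self.trans (Ioi_subset_Ioi hy)),
          lintegral_mul_const _ (by fun_prop)]

theorem lintegral_Ioo_deriv {f f' : ℝ → ℝ} (hf : ∀ s, HasDerivAt f (f' s) s) (hc : Continuous f')
    (h₀ : ∀ s, 0 ≤ f' s) {a t : ℝ} (hat : a ≤ t) :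
    ∫⁻ s in Ioo a t, ENNReal.ofReal (f' s) = ENNReal.ofReal (f t - f a) := by
  rw [← intervalIntegral.integral_eq_sub_of_hasDerivAt (fun s _ ↦ hf s)
    (hc.intervalIntegrable _ _), intervalIntegral.integral_of_le hat, restrict_Ioo_eq_restrict_Ioc,
    ofReal_integral_eq_lintegral_ofReal hc.integrableOn_Ioc (ae_of_all _ h₀)]

theorem mul_lintegral_exp_left (k : ℝ≥0) {a t : ℝ} (hat : a ≤ t) :
    (k : ℝ≥0∞) * ∫⁻ s in Ioo a t, ENNReal.ofReal (Real.exp (-k * (t - s)))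
      = ENNReal.ofReal (1 - Real.exp (-k * (t - a))) := by
  have hderiv (s : ℝ) : HasDerivAt (fun s ↦ Real.exp (-k * (t - s)))
      (k * Real.exp (-k * (t - s))) s := by
    convert! (((hasDerivAt_id s).const_sub t).const_mul (-(k : ℝ))).exp using 1
    simp only [id]
    ring
  rw [← lintegral_const_mul _ (by fun_prop), ← ENNReal.ofReal_coe_nnreal]
  simp only [← ENNReal.ofReal_mul k.coe_nonneg]
  rw [lintegral_Ioo_deriv hderiv (by fun_prop) (fun s ↦ by positivity) hat, sub_self, mul_zero,
    Real.exp_zero]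

theorem mul_lintegral_exp_right (k : ℝ≥0) {a t : ℝ} (hat : a ≤ t) :
    (k : ℝ≥0∞) * ∫⁻ s in Ioo a t, ENNReal.ofReal (Real.exp (-k * (s - a)))
      = ENNReal.ofReal (1 - Real.exp (-k * (t - a))) := by
  have hderiv (s : ℝ) : HasDerivAt (fun s ↦ -Real.exp (-k * (s - a)))
      (k * Real.exp (-k * (s - a))) s := by
    convert! (((hasDerivAt_id s).sub_const a).const_mul (-(k : ℝ))).exp.neg using 1
    simp only [id]
    ring
  rw [← lintegral_const_mul _ (by fun_prop), ← ENNReal.ofReal_coe_nnreal]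
  simp only [← ENNReal.ofReal_mul k.coe_nonneg]
  rw [lintegral_Ioo_deriv hderiv (by fun_prop) (fun s ↦ by positivity) hat, sub_self, mul_zero,
    Real.exp_zero, neg_sub_neg]

/-- The damped heat potential for the time measure `τ`: integration of sources against
`heatDensity`. With an atom of `τ` at `0` it also propagates initial data. -/
def heatPotential (n : ℕ) (α : ℝ) (τ : Measure ℝ) [SFinite τ] (k : ℝ≥0) :
    Kernel (ℝ × Rn n) (ℝ × Rn n) :=
  Kernel.withDensity (Kernel.const _ (τ.prod volume)) (heatDensity n α k)

variable {τ τ' : Measure ℝ} [SFinite τ] [SFinite τ']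

instance : IsSFiniteKernel (heatPotential n α τ k) :=
  Kernel.IsSFiniteKernel.withDensity _ fun _ _ ↦ heatDensity_ne_top

theorem heatPotential_apply (z : ℝ × Rn n) :
    heatPotential n α τ k z = (τ.prod volume).withDensity (heatDensity n α k z) := by
  rw [heatPotential, Kernel.withDensity_apply _ measurable_heatDensity, Kernel.const_apply]

theorem lintegral_heatPotential (z : ℝ × Rn n) {g : ℝ × Rn n → ℝ≥0∞} (hg : Measurable g) :
    ∫⁻ w, g w ∂heatPotential n α τ k z = ∫⁻ w, heatDensity n α k z w * g w ∂τ.prod volume := by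
  rw [heatPotential_apply, lintegral_withDensity_eq_lintegral_mul _
    measurable_heatDensity.of_uncurry_left hg]
  rfl

theorem lintegral_heatPotential_comp (j : ℝ≥0) (z : ℝ × Rn n) {g : ℝ × Rn n → ℝ≥0∞}
    (hg : Measurable g) :
    ∫⁻ w, g w ∂(heatPotential n α τ k ∘ₖ heatPotential n α τ' j) z
      = ∫⁻ y, (∫⁻ x, heatDensity n α j z x * heatDensity n α k x y ∂τ'.prod volume) * g y
        ∂τ.prod volume := by
  have hk : Measurable (Function.uncurry (heatDensity n α k)) := measurable_heatDensity
  have hj : Measurable (heatDensity n α j z) := measurable_heatDensity.of_uncurry_left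
  rw [Kernel.lintegral_comp _ _ _ hg, lintegral_heatPotential _ hg.lintegral_kernel]
  calc _ = ∫⁻ x, ∫⁻ y, heatDensity n α j z x * heatDensity n α k x y * g y ∂τ.prod volume
        ∂τ'.prod volume := by
        refine lintegral_congr fun x ↦ ?_
        rw [lintegral_heatPotential _ hg, ← lintegral_const_mul _ (hk.of_uncurry_left.fun_mul hg)]
        simp only [mul_assoc]
    _ = ∫⁻ y, ∫⁻ x, heatDensity n α j z x * heatDensity n α k x y * g y ∂τ'.prod volume
        ∂τ.prod volume :=
        lintegral_lintegral_swap
          (((hj.comp measurable_fst).mul hk).mul (hg.comp measurable_snd)).aemeasurable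
    _ = _ := lintegral_congr fun y ↦ lintegral_mul_const _ (hj.mul hk.of_uncurry_right)

theorem heatPotential_eq_add_smul_comp (hτ : ∀ᵐ s ∂τ, 0 ≤ s) {j k l : ℝ≥0}
    (h : ∀ y : ℝ × Rn n, 0 ≤ y.1 →
      (l : ℝ≥0∞) * ∫⁻ x, heatDensity n α j z x * heatDensity n α k x y
        ∂(volume.restrict (Ioi 0)).prod volume
        = ENNReal.ofReal (1 - Real.exp (-l * (z.1 - y.1))) * heatDensity n α 0 z y) :
    heatPotential n α τ 0 z = heatPotential n α τ l z
      + l • (heatPotential n α τ k ∘ₖ heatPotential n α (volume.restrict (Ioi 0)) j) z := by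
  refine Measure.ext_of_lintegral _ fun g hg ↦ ?_
  rw [lintegral_add_measure, lintegral_smul_measure, lintegral_heatPotential_comp _ _ hg,
    lintegral_heatPotential _ hg, lintegral_heatPotential _ hg, ENNReal.smul_def, smul_eq_mul,
    ← lintegral_const_mul' _ _ ENNReal.coe_ne_top,
    ← lintegral_add_left (measurable_heatDensity.of_uncurry_left.fun_mul hg)]
  refine lintegral_congr_ae ?_
  filter_upwards [(Measure.quasiMeasurePreserving_fst (ν := volume)).ae hτ] with y hy
  rw [← mul_assoc, h y hy, ← add_mul, heatDensity_add_one_sub_exp_mul]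

theorem heatPotential_comp_le (hα : 0 < α ∧ α ≤ 1) (hτ : ∀ᵐ s ∂τ, 0 ≤ s) (z : ℝ × Rn n) :
    (heatPotential n α τ 0 ∘ₖ heatPotential n α (volume.restrict (Ioi 0)) 0) z
      ≤ z.1.toNNReal • heatPotential n α τ 0 z := by
  refine Measure.le_iff.2 fun s hs ↦ ?_
  have hg : Measurable (s.indicator (1 : ℝ × Rn n → ℝ≥0∞)) := measurable_one.indicator hs
  rw [← lintegral_indicator_one hs, Measure.smul_apply, ← lintegral_indicator_one hs,
    lintegral_heatPotential_comp _ _ hg, lintegral_heatPotential _ hg, ENNReal.smul_def,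
    smul_eq_mul, ← lintegral_const_mul' _ _ ENNReal.coe_ne_top]
  refine lintegral_mono_ae ?_
  filter_upwards [(Measure.quasiMeasurePreserving_fst (ν := volume)).ae hτ] with y hy
  rw [lintegral_damped_heatDensity_mul hα _ _ hy, ← mul_assoc]
  gcongr
  simp only [NNReal.coe_zero, neg_zero, zero_mul, Real.exp_zero, ENNReal.ofReal_one, mul_one,
    setLIntegral_one, Real.volume_Ioo]
  exact ENNReal.ofReal_le_ofReal (sub_le_self _ hy)

theorem isResolventPair_heatPotential (hα : 0 < α ∧ α ≤ 1) (hτ : ∀ᵐ s ∂τ, 0 ≤ s) :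
    IsResolventPair (heatPotential n α (volume.restrict (Ioi 0)) 0)
      (heatPotential n α (volume.restrict (Ioi 0))) (heatPotential n α τ 0)
      (heatPotential n α τ) where
  left k z := by
    refine heatPotential_eq_add_smul_comp hτ fun y hy ↦ ?_
    rw [lintegral_damped_heatDensity_mul hα _ _ hy, ← mul_assoc]
    rcases le_or_gt y.1 z.1 with hyz | hyz
    · simp only [← mul_lintegral_exp_left k hyz, NNReal.coe_zero, neg_zero, zero_mul,
        Real.exp_zero, ENNReal.ofReal_one, mul_one]
    · rw [heatDensity_of_le hyz.le, mul_zero, mul_zero]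
  right k z := by
    refine heatPotential_eq_add_smul_comp hτ fun y hy ↦ ?_
    rw [lintegral_damped_heatDensity_mul hα _ _ hy, ← mul_assoc]
    rcases le_or_gt y.1 z.1 with hyz | hyz
    · simp only [← mul_lintegral_exp_right k hyz, NNReal.coe_zero, neg_zero, zero_mul,
        Real.exp_zero, ENNReal.ofReal_one, one_mul]
    · rw [heatDensity_of_le hyz.le, mul_zero, mul_zero]
  comp_le z := ⟨_, heatPotential_comp_le hα hτ z⟩

theorem heatPotential_restrict_apply {S : Set ℝ} (z : ℝ × Rn n) :
    heatPotential n α (volume.restrict S) k z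
      = ((volume.restrict (Iio z.1 ∩ S)).prod volume).withDensity (heatDensity n α k z) := by
  have hsupp : heatDensity n α k z = (Iio z.1 ×ˢ univ).indicator (heatDensity n α k z) := by
    refine Eq.symm (indicator_eq_self.2 fun w hw ↦ ⟨?_, mem_univ _⟩)
    exact not_le.1 fun h ↦ hw (heatDensity_of_le h)
  rw [heatPotential_apply, hsupp,
    withDensity_indicator (measurableSet_Iio.prod MeasurableSet.univ), ← hsupp,
    ← Measure.prod_restrict, Measure.restrict_univ, Measure.restrict_restrict measurableSet_Iio]

theorem heatPotential_restrict_Ioi_apply (z : ℝ × Rn n) :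
    heatPotential n α (volume.restrict (Ioi 0)) k z
      = ((volume.restrict (Ioc 0 z.1)).prod volume).withDensity (heatDensity n α k z) := by
  rw [heatPotential_restrict_apply, inter_comm, Ioi_inter_Iio, restrict_Ioo_eq_restrict_Ioc]

theorem heatPotential_restrict_Ioc_apply {T : ℝ} (hz : z.1 ≤ T) :
    heatPotential n α (volume.restrict (Ioc 0 T)) k z
      = heatPotential n α (volume.restrict (Ioi 0)) k z := by
  have hset : Iio z.1 ∩ Ioc 0 T = Ioo 0 z.1 := by
    ext s
    exact ⟨fun h ↦ ⟨h.2.1, h.1⟩, fun h ↦ ⟨h.2, h.1, h.2.le.trans hz⟩⟩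
  rw [heatPotential_restrict_Ioi_apply, heatPotential_restrict_apply, hset,
    restrict_Ioo_eq_restrict_Ioc]

theorem heatPotential_absolutelyContinuous {T : ℝ} (hz : z.1 ≤ T) :
    heatPotential n α (volume.restrict (Ioi 0)) k z
      ≪ (volume.restrict (Ioc 0 T)).prod volume := by
  rw [heatPotential_restrict_Ioi_apply]
  exact (withDensity_absolutelyContinuous _ _).trans
    ((Measure.restrict_mono_set _ (Ioc_subset_Ioc_right hz)).absolutelyContinuous.prod .rfl)

theorem isFiniteMeasure_heatPotential (hα : 0 < α ∧ α ≤ 1) :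
    IsFiniteMeasure (heatPotential n α (volume.restrict (Ioi 0)) 0 z) := by
  refine ⟨?_⟩
  rw [heatPotential_restrict_Ioi_apply, withDensity_apply _ MeasurableSet.univ,
    Measure.restrict_univ, lintegral_prod _ measurable_heatDensity.of_uncurry_left.aemeasurable]
  refine (lintegral_mono fun s ↦ lintegral_heatDensity_right_le_one hα s).trans_lt ?_
  rw [lintegral_one, Measure.restrict_apply_univ]
  exact measure_Ioc_lt_top

end HeatPotential

section Embedding

variable {n : ℕ} {q : ℝ} {qb : Rn n → ℝ}

theorem IsPembq.exists_abs_one_div_sub_le (hn : 1 ≤ n) (hq : 0 < q) (hqb : IsPembq n q qb) :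
    ∃ C > 0, ∀ x, |1 / qb x - 1 / q| ≤ C / Real.log (Real.exp 1 + ‖x‖) := by
  obtain ⟨⟨-, h1, -, -, C, hC, pinf, -, hdecay⟩, -, -, hlim⟩ := hqb
  have : Nonempty (Fin n) := ⟨⟨0, hn⟩⟩
  have hq_lim : Tendsto (fun x ↦ 1 / qb x) (cocompact (Rn n)) (𝓝 (1 / q)) := by
    have h := (hlim.inv_tendsto_atTop).const_sub (1 / q)
    rw [sub_zero] at h
    refine h.congr fun x ↦ ?_
    have : qb x ≠ 0 := by linarith [h1 x (mem_univ x)]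
    simp only [Pi.inv_apply, inv_div]
    field_simp
    ring
  have hlog : Tendsto (fun x : Rn n ↦ C / Real.log (Real.exp 1 + ‖x‖)) (cocompact _) (𝓝 0) :=
    tendsto_const_nhds.div_atTop (Real.tendsto_log_atTop.comp
      (tendsto_const_nhds.add_atTop (tendsto_norm_cocompact_atTop)))
  have hpinf_lim : Tendsto (fun x ↦ 1 / qb x) (cocompact (Rn n)) (𝓝 (1 / pinf)) :=
    tendsto_sub_nhds_zero_iff.1 (squeeze_zero_norm (fun x ↦ hdecay x (mem_univ x)) hlog)
  refine ⟨C, hC, fun x ↦ ?_⟩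
  rw [tendsto_nhds_unique hq_lim hpinf_lim]
  exact hdecay x (mem_univ x)

theorem IsPembq.ae_le (hqb : IsPembq n q qb) : ∀ᵐ x, q ≤ qb x := by
  obtain ⟨⟨-, h1, -⟩, hess, -⟩ := hqb
  filter_upwards [ae_essInf_le (isBoundedUnder_of ⟨1, fun x ↦ h1 x (mem_univ x)⟩)] with x hx
  exact hess.trans hx

theorem IsPembq.exists_sub_mul_log_le (hn : 1 ≤ n) (hq : 0 < q) (hqb : IsPembq n q qb) :
    ∃ K, ∀ᵐ x, (qb x - q) * Real.log (Real.exp 1 + ‖x‖) ≤ K := by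
  obtain ⟨C, hC, hdecay⟩ := hqb.exists_abs_one_div_sub_le hn hq
  have hle := hqb.ae_le
  obtain ⟨-, -, ⟨M, hM⟩, -⟩ := hqb
  refine ⟨C * (q * max M 0), ?_⟩
  filter_upwards [hle, hM] with x hx hxM
  have hqx : 0 < qb x := hq.trans_le hx
  have hlog : 0 < Real.log (Real.exp 1 + ‖x‖) :=
    Real.log_pos (by linarith [Real.add_one_lt_exp one_ne_zero, norm_nonneg x])
  have hdiff : (qb x - q) / (q * qb x) ≤ C / Real.log (Real.exp 1 + ‖x‖) := by
    refine le_trans (le_of_eq ?_) ((neg_le_abs _).trans (hdecay x))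
    field_simp
    ring
  rw [div_le_div_iff₀ (by positivity) hlog] at hdiff
  exact hdiff.trans (by gcongr; exact hxM.trans (le_max_left _ _))

theorem rpow_le_mul_rpow_add_rpow {r : ℝ} (hq : 0 ≤ q) (hr : q ≤ r) {K H : ℝ≥0∞}
    (hKH : 1 ≤ K * H ^ (r - q)) (a : ℝ≥0∞) : a ^ q ≤ K * a ^ r + H ^ q := by
  rcases le_total H a with h | h
  · refine le_add_right ?_
    calc a ^ q ≤ K * H ^ (r - q) * a ^ q := le_mul_of_one_le_left zero_le hKH
      _ ≤ K * a ^ (r - q) * a ^ q := by gcongr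
      _ = K * a ^ r := by
        rw [mul_assoc, ← ENNReal.rpow_add_of_nonneg _ _ (sub_nonneg.2 hr) hq, sub_add_cancel]
  · exact le_add_left (ENNReal.rpow_le_rpow h hq)

/-- Where `a` is smaller than the weight `(1 + ‖x‖) ^ (-(n + 1) / q)`, the second term dominates;
elsewhere `a ^ (qb x - q)` is bounded below, by the logarithmic decay of `qb - q`. -/
theorem IsPembq.exists_rpow_le (hn : 1 ≤ n) (hq : 0 < q) (hqb : IsPembq n q qb) :
    ∃ K : ℝ≥0∞, K ≠ ∞ ∧ ∀ᵐ x, ∀ a : ℝ≥0∞,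
      a ^ q ≤ K * a ^ qb x + ENNReal.ofReal ((1 + ‖x‖) ^ (-((n : ℝ) + 1))) := by
  obtain ⟨K, hlogK⟩ := hqb.exists_sub_mul_log_le hn hq
  refine ⟨ENNReal.ofReal (Real.exp ((n + 1) / q * K)), ENNReal.ofReal_ne_top, ?_⟩
  filter_upwards [hqb.ae_le, hlogK] with x hx hxK a
  have hpos : 0 < 1 + ‖x‖ := by positivity
  have hweight : ENNReal.ofReal ((1 + ‖x‖) ^ (-((n : ℝ) + 1)))
      = ENNReal.ofReal ((1 + ‖x‖) ^ (-((n + 1) / q))) ^ q := by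
    rw [ENNReal.ofReal_rpow_of_nonneg (by positivity) hq.le, ← Real.rpow_mul hpos.le, neg_mul,
      div_mul_cancel₀ _ hq.ne']
  rw [hweight]
  refine rpow_le_mul_rpow_add_rpow hq.le hx ?_ a
  rw [ENNReal.ofReal_rpow_of_nonneg (by positivity) (sub_nonneg.2 hx), ← Real.rpow_mul hpos.le,
    ← ENNReal.ofReal_mul (Real.exp_pos _).le, ENNReal.one_le_ofReal, Real.rpow_def_of_pos hpos,
    ← Real.exp_add]
  refine Real.one_le_exp ?_
  have hlog : (qb x - q) * Real.log (1 + ‖x‖) ≤ K := by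
    refine le_trans (mul_le_mul_of_nonneg_left (Real.log_le_log hpos ?_) (sub_nonneg.2 hx)) hxK
    linarith [Real.add_one_lt_exp one_ne_zero]
  calc (0 : ℝ) ≤ (n + 1) / q * (K - (qb x - q) * Real.log (1 + ‖x‖)) :=
        mul_nonneg (by positivity) (sub_nonneg.2 hlog)
    _ = _ := by ring

theorem IsPembq.exists_lintegral_le (hn : 1 ≤ n) (hq : 0 < q) (hqb : IsPembq n q qb) :
    ∃ C : ℝ≥0∞, C ≠ ∞ ∧ ∀ g : Rn n → ℝ≥0∞, ∫⁻ x, g x ^ qb x ≤ 1 → ∫⁻ x, g x ^ q ≤ C := by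
  obtain ⟨K, hK, hle⟩ := hqb.exists_rpow_le hn hq
  have hfin := finite_integral_one_add_norm (E := Rn n) (μ := volume) (r := n + 1)
    (by rw [finrank_euclideanSpace_fin]; exact lt_add_one _)
  refine ⟨K + ∫⁻ x : Rn n, ENNReal.ofReal ((1 + ‖x‖) ^ (-((n : ℝ) + 1))),
    ENNReal.add_ne_top.2 ⟨hK, hfin.ne⟩, fun g hg ↦ ?_⟩
  refine (lintegral_mono_ae (hle.mono fun x hx ↦ hx (g x))).trans ?_
  rw [lintegral_add_right _ (by fun_prop), lintegral_const_mul' _ _ hK]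
  gcongr
  exact mul_le_of_le_one_right zero_le hg

theorem IsPembq.exists_eLpNorm_le (hn : 1 ≤ n) (hq : 0 < q) (hqb : IsPembq n q qb) :
    ∃ C : ℝ≥0∞, C ≠ ∞ ∧ ∀ g : Rn n → ℝ,
      eLpNorm g (ENNReal.ofReal q) volume ≤ C * luxNormR volume qb g := by
  obtain ⟨C, hC, hmod⟩ := hqb.exists_lintegral_le hn hq
  have hC0 : max C 1 ^ q⁻¹ ≠ 0 := (ENNReal.rpow_pos (by positivity) (by finiteness)).ne'
  have hC1 : max C 1 ^ q⁻¹ ≠ ∞ := by finiteness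
  refine ⟨max C 1 ^ q⁻¹, hC1, fun g ↦ ?_⟩
  rw [mul_comm, ← ENNReal.div_le_iff hC0 hC1]
  refine le_sInf fun lam ⟨hlam, hle⟩ ↦ ?_
  rw [ENNReal.div_le_iff hC0 hC1]
  rcases eq_or_ne lam ∞ with rfl | hlam'
  · exact le_top.trans_eq (ENNReal.top_mul hC0).symm
  have hnorm : eLpNorm g (ENNReal.ofReal q) volume = (∫⁻ x, ENNReal.ofReal |g x| ^ q) ^ q⁻¹ := by
    rw [eLpNorm_eq_lintegral_rpow_enorm_toReal (by simpa) ENNReal.ofReal_ne_top,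
      ENNReal.toReal_ofReal hq.le, one_div]
    simp only [Real.enorm_eq_ofReal_abs]
  have h := (hmod _ hle).trans (le_max_left C 1)
  simp only [ENNReal.div_rpow_of_nonneg _ _ hq.le] at h
  simp only [div_eq_mul_inv] at h
  rw [lintegral_mul_const' _ _ (by simp [hlam.ne', hq.not_gt, hlam']), ← div_eq_mul_inv,
    ENNReal.div_le_iff (ENNReal.rpow_pos hlam hlam').ne' (by finiteness)] at h
  rw [hnorm, ENNReal.rpow_inv_le_iff hq, ENNReal.mul_rpow_of_nonneg _ _ hq.le,
    ENNReal.rpow_inv_rpow hq.ne', mul_comm]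
  exact h

theorem IsPembq.eLpNorm_lt_top (hn : 1 ≤ n) (hq : 0 < q) (hqb : IsPembq n q qb) {g : Rn n → ℝ}
    (hg : luxNormR volume qb g < ∞) : eLpNorm g (ENNReal.ofReal q) volume < ∞ := by
  obtain ⟨C, hC, hle⟩ := hqb.exists_eLpNorm_le hn hq
  exact (hle g).trans_lt (ENNReal.mul_lt_top hC.lt_top hg)

theorem IsPembq.lintegral_eLpNorm_lt_top (hn : 1 ≤ n) (hq : 0 < q) (hqb : IsPembq n q qb)
    {X : Type*} [MeasurableSpace X] {μ : Measure X} {f : X → Rn n → ℝ}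
    (hf : ∫⁻ s, luxNormR volume qb (f s) ∂μ < ∞) :
    ∫⁻ s, eLpNorm (f s) (ENNReal.ofReal q) volume ∂μ < ∞ := by
  obtain ⟨C, hC, hle⟩ := hqb.exists_eLpNorm_le hn hq
  calc _ ≤ ∫⁻ s, C * luxNormR volume qb (f s) ∂μ := lintegral_mono fun s ↦ hle (f s)
    _ = C * ∫⁻ s, luxNormR volume qb (f s) ∂μ := lintegral_const_mul' _ _ hC
    _ < ∞ := ENNReal.mul_lt_top hC.lt_top hf

end Embedding

section LpNorm

variable {X Y : Type*} [MeasurableSpace X] [MeasurableSpace Y] {μ : Measure X} {ν : Measure Y}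
  {q r : ℝ}

theorem eLpNorm_ofReal_rpow {E : Type*} [TopologicalSpace E] [ContinuousENorm E] (hq : 0 < q)
    (g : X → E) : eLpNorm g (ENNReal.ofReal q) μ ^ q = ∫⁻ x, ‖g x‖ₑ ^ q ∂μ := by
  rw [eLpNorm_eq_lintegral_rpow_enorm_toReal (ENNReal.ofReal_pos.2 hq).ne' ENNReal.ofReal_ne_top,
    ENNReal.toReal_ofReal hq.le, ← ENNReal.rpow_mul, one_div_mul_cancel hq.ne', ENNReal.rpow_one]

theorem eLpNorm_ofReal_prod [SFinite ν] (hr : 0 < r) {f : X × Y → ℝ≥0∞} (hf : Measurable f) :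
    eLpNorm f (ENNReal.ofReal r) (μ.prod ν)
      = eLpNorm (fun x ↦ eLpNorm (fun y ↦ f (x, y)) (ENNReal.ofReal r) ν)
        (ENNReal.ofReal r) μ := by
  rw [← (ENNReal.rpow_left_injective hr.ne').eq_iff]
  simp only [eLpNorm_ofReal_rpow hr, enorm_eq_self]
  exact lintegral_prod _ (hf.pow_const r).aemeasurable

theorem eLpNorm_mul_const_ennreal (hr : 0 < r) {g : X → ℝ≥0∞} (hg : Measurable g) (c : ℝ≥0∞) :
    eLpNorm (fun x ↦ g x * c) (ENNReal.ofReal r) μ = eLpNorm g (ENNReal.ofReal r) μ * c := by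
  rw [← (ENNReal.rpow_left_injective hr.ne').eq_iff]
  simp only [eLpNorm_ofReal_rpow hr, enorm_eq_self, ENNReal.mul_rpow_of_nonneg _ _ hr.le]
  exact lintegral_mul_const _ (hg.pow_const r)

theorem measurable_eLpNorm_ofReal [SFinite ν] (hr : 0 < r) {f : X → Y → ℝ≥0∞}
    (hf : Measurable (Function.uncurry f)) :
    Measurable fun x ↦ eLpNorm (f x) (ENNReal.ofReal r) ν := by
  simp only [eLpNorm_eq_lintegral_rpow_enorm_toReal (ENNReal.ofReal_pos.2 hr).ne'
    ENNReal.ofReal_ne_top]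
  exact ((hf.enorm.pow_const _).lintegral_prod_right').pow_const _

theorem lintegral_mul_rpow_le (hr : 1 ≤ r) {w g : X → ℝ≥0∞} (hw : Measurable w)
    (hg : Measurable g) :
    (∫⁻ x, w x * g x ∂μ) ^ r ≤ (∫⁻ x, w x ∂μ) ^ (r - 1) * ∫⁻ x, w x * g x ^ r ∂μ := by
  rcases hr.eq_or_lt with rfl | hr
  · simp only [ENNReal.rpow_one, sub_self, ENNReal.rpow_zero, one_mul, le_refl]
  have hr₀ : 0 < r := zero_lt_one.trans hr
  have hlintegral {h : X → ℝ≥0∞} (hh : Measurable h) :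
      ∫⁻ x, w x * h x ∂μ = ∫⁻ x, h x ∂μ.withDensity w :=
    (lintegral_withDensity_eq_lintegral_mul _ hw hh).symm
  rw [hlintegral hg, hlintegral (hg.pow_const r), ← setLIntegral_univ w,
    ← withDensity_apply _ MeasurableSet.univ]
  generalize μ.withDensity w = ν
  have hHölder := ENNReal.lintegral_mul_le_Lp_mul_Lq ν (Real.HolderConjugate.conjExponent hr)
    hg.aemeasurable (g := 1) aemeasurable_const
  simp only [Pi.mul_apply, Pi.one_apply, mul_one, ENNReal.one_rpow, lintegral_one] at hHölder
  calc (∫⁻ x, g x ∂ν) ^ r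
      ≤ ((∫⁻ x, g x ^ r ∂ν) ^ (1 / r) * ν univ ^ (1 / r.conjExponent)) ^ r := by gcongr
    _ = ν univ ^ (r - 1) * ∫⁻ x, g x ^ r ∂ν := by
      rw [ENNReal.mul_rpow_of_nonneg _ _ hr₀.le, ← ENNReal.rpow_mul, ← ENNReal.rpow_mul,
        one_div_mul_cancel hr₀.ne', ENNReal.rpow_one, mul_comm, Real.conjExponent]
      congr 2
      field_simp

theorem ae_lintegral_eq_lintegral_eLpNorm_mul_div [SFinite μ] [SFinite ν] (hr : 0 < r)
    {f : X → Y → ℝ≥0∞} (hf : Measurable (Function.uncurry f))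
    (htop : ∫⁻ x, eLpNorm (f x) (ENNReal.ofReal r) ν ∂μ ≠ ∞) :
    ∀ᵐ y ∂ν, ∫⁻ x, f x y ∂μ = ∫⁻ x, eLpNorm (f x) (ENNReal.ofReal r) ν *
      (f x y / eLpNorm (f x) (ENNReal.ofReal r) ν) ∂μ := by
  have hN : Measurable fun x ↦ eLpNorm (f x) (ENNReal.ofReal r) ν := measurable_eLpNorm_ofReal hr hf
  have hzero : ∀ᵐ x ∂μ, ∀ᵐ y ∂ν, eLpNorm (f x) (ENNReal.ofReal r) ν = 0 → f x y = 0 := by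
    refine ae_of_all _ fun x ↦ ?_
    rw [eventually_imp_distrib_left]
    exact fun hx ↦ (eLpNorm_eq_zero_iff hf.of_uncurry_left.aestronglyMeasurable
      (ENNReal.ofReal_pos.2 hr).ne').1 hx
  have hmeas : MeasurableSet
      {p : X × Y | eLpNorm (f p.1) (ENNReal.ofReal r) ν = 0 → f p.1 p.2 = 0} := by
    simp only [imp_iff_not_or]
    exact ((hN.comp measurable_fst) (measurableSet_singleton 0)).compl.union
      (hf (measurableSet_singleton 0))
  filter_upwards [(Measure.ae_ae_comm hmeas).1 hzero] with y hy
  refine lintegral_congr_ae ?_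
  filter_upwards [hy, ae_lt_top hN htop] with x hx hx_top
  rcases eq_or_ne (eLpNorm (f x) (ENNReal.ofReal r) ν) 0 with h₀ | h₀
  · rw [h₀, zero_mul, hx h₀]
  · exact (ENNReal.mul_div_cancel h₀ hx_top.ne).symm

theorem lintegral_div_eLpNorm_rpow_le_one (hr : 0 < r) {g : X → ℝ≥0∞} (hg : Measurable g) :
    ∫⁻ x, (g x / eLpNorm g (ENNReal.ofReal r) μ) ^ r ∂μ ≤ 1 := by
  have hgr : ∫⁻ x, g x ^ r ∂μ = eLpNorm g (ENNReal.ofReal r) μ ^ r :=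
    (eLpNorm_ofReal_rpow hr g).symm
  simp only [div_eq_mul_inv, ENNReal.mul_rpow_of_nonneg _ _ hr.le]
  rw [lintegral_mul_const _ (hg.pow_const r), hgr, ← ENNReal.mul_rpow_of_nonneg _ _ hr.le,
    ← div_eq_mul_inv]
  exact ENNReal.rpow_le_one ENNReal.div_self_le_one hr.le

/-- Minkowski's integral inequality: apply `lintegral_mul_rpow_le` with weight `x ↦ ‖f x‖_r` to the
normalized functions `f x / ‖f x‖_r`. -/
theorem eLpNorm_lintegral_le [SFinite μ] [SFinite ν] (hr : 1 ≤ r) {f : X → Y → ℝ≥0∞}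
    (hf : Measurable (Function.uncurry f)) :
    eLpNorm (fun y ↦ ∫⁻ x, f x y ∂μ) (ENNReal.ofReal r) ν
      ≤ ∫⁻ x, eLpNorm (f x) (ENNReal.ofReal r) ν ∂μ := by
  have hr₀ : 0 < r := zero_lt_one.trans_le hr
  rcases eq_or_ne (∫⁻ x, eLpNorm (f x) (ENNReal.ofReal r) ν ∂μ) ∞ with htop | htop
  · exact htop ▸ le_top
  have hnormalize := ae_lintegral_eq_lintegral_eLpNorm_mul_div hr₀ hf htop
  set N : X → ℝ≥0∞ := fun x ↦ eLpNorm (f x) (ENNReal.ofReal r) ν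
  have hN : Measurable N := measurable_eLpNorm_ofReal hr₀ hf
  have hprod : Measurable fun p : Y × X ↦ N p.2 * (f p.2 p.1 / N p.2) ^ r :=
    (hN.comp measurable_snd).mul
      (((hf.comp measurable_swap).div (hN.comp measurable_snd)).pow_const r)
  have hpull (x : X) :
      ∫⁻ y, N x * (f x y / N x) ^ r ∂ν = N x * ∫⁻ y, (f x y / N x) ^ r ∂ν :=
    lintegral_const_mul _ ((hf.of_uncurry_left.div_const _).pow_const r)
  have hunit (x : X) : ∫⁻ y, (f x y / N x) ^ r ∂ν ≤ 1 :=
    lintegral_div_eLpNorm_rpow_le_one hr₀ hf.of_uncurry_left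
  rw [← ENNReal.rpow_le_rpow_iff hr₀, eLpNorm_ofReal_rpow hr₀]
  calc ∫⁻ y, ‖∫⁻ x, f x y ∂μ‖ₑ ^ r ∂ν
      = ∫⁻ y, (∫⁻ x, N x * (f x y / N x) ∂μ) ^ r ∂ν :=
        lintegral_congr_ae (hnormalize.mono fun y hy ↦ congrArg (· ^ r) hy)
    _ ≤ ∫⁻ y, (∫⁻ x, N x ∂μ) ^ (r - 1) * ∫⁻ x, N x * (f x y / N x) ^ r ∂μ ∂ν :=
        lintegral_mono fun y ↦ lintegral_mul_rpow_le hr hN (hf.of_uncurry_right.div hN)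
    _ = (∫⁻ x, N x ∂μ) ^ (r - 1) * ∫⁻ x, N x * ∫⁻ y, (f x y / N x) ^ r ∂ν ∂μ := by
        rw [lintegral_const_mul _ hprod.lintegral_prod_right',
          lintegral_lintegral_swap hprod.aemeasurable]
        exact congrArg _ (lintegral_congr hpull)
    _ ≤ (∫⁻ x, N x ∂μ) ^ (r - 1) * ∫⁻ x, N x ∂μ := by
        gcongr with x
        exact mul_le_of_le_one_right' (hunit x)
    _ = (∫⁻ x, N x ∂μ) ^ r := by
        nth_rewrite 2 [← ENNReal.rpow_one (∫⁻ x, N x ∂μ)]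
        rw [← ENNReal.rpow_add_of_nonneg _ _ (sub_nonneg.2 hr) zero_le_one, sub_add_cancel]

end LpNorm

section Young

variable {G : Type*} [NormedAddCommGroup G] [MeasurableSpace G] [BorelSpace G]
  [SecondCountableTopology G] {μ : Measure G} [μ.IsAddLeftInvariant]
  {k φ : G → ℝ≥0∞} {q r : ℝ}

theorem lintegral_conv_rpow_le_lintegral_conv [μ.IsNegInvariant] (hk : Measurable k)
    (hφ : Measurable φ) (hk₁ : ∫⁻ x, k x ∂μ ≤ 1) (hq : 1 ≤ q) (x : G) :
    (∫⁻ y, k (x - y) * φ y ∂μ) ^ q ≤ ∫⁻ y, k (x - y) * φ y ^ q ∂μ := by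
  have hkx : Measurable fun y ↦ k (x - y) := hk.comp (measurable_const.sub measurable_id)
  refine (lintegral_mul_rpow_le hq hkx hφ).trans (mul_le_of_le_one_left zero_le ?_)
  rw [lintegral_sub_left_eq_self k x]
  exact ENNReal.rpow_le_one hk₁ (sub_nonneg.2 hq)

theorem lintegral_lintegral_conv_le [SFinite μ] (hk : Measurable k) (hφ : Measurable φ)
    (hk₁ : ∫⁻ x, k x ∂μ ≤ 1) :
    ∫⁻ x, ∫⁻ y, k (x - y) * φ y ∂μ ∂μ ≤ ∫⁻ y, φ y ∂μ := by
  have hm : Measurable fun p : G × G ↦ k (p.1 - p.2) * φ p.2 :=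
    (hk.comp measurable_sub).mul (hφ.comp measurable_snd)
  rw [lintegral_lintegral_swap hm.aemeasurable]
  refine lintegral_mono fun y ↦ ?_
  have hky : Measurable fun x ↦ k (x - y) := hk.comp (measurable_id.sub measurable_const)
  rw [lintegral_mul_const _ hky, lintegral_sub_right_eq_self k y]
  exact mul_le_of_le_one_left zero_le hk₁

/-- Young's inequality, with the norm of the kernel interpolated between `L^1` and `L^∞`. -/
theorem eLpNorm_conv_le [SFinite μ] [μ.IsNegInvariant] (hk : Measurable k) (hφ : Measurable φ)
    (hk₁ : ∫⁻ x, k x ∂μ ≤ 1) {D : ℝ≥0∞} (hD : ∀ x, k x ≤ D) (hq : 1 ≤ q) (hqr : q ≤ r) :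
    eLpNorm (fun x ↦ ∫⁻ y, k (x - y) * φ y ∂μ) (ENNReal.ofReal r) μ
      ≤ D ^ (1 / q - 1 / r) * eLpNorm φ (ENNReal.ofReal q) μ := by
  have hq₀ : 0 < q := zero_lt_one.trans_le hq
  have hr₀ : 0 < r := hq₀.trans_le hqr
  have hrq : 0 ≤ (r - q) / q := div_nonneg (sub_nonneg.2 hqr) hq₀.le
  set A := ∫⁻ y, φ y ^ q ∂μ
  have hjensen := lintegral_conv_rpow_le_lintegral_conv hk hφ hk₁ hq
  have hsup (x : G) : ∫⁻ y, k (x - y) * φ y ^ q ∂μ ≤ D * A := by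
    rw [← lintegral_const_mul _ (hφ.pow_const q)]
    exact lintegral_mono fun y ↦ mul_le_mul_left (hD _) _
  have hpoint (x : G) : (∫⁻ y, k (x - y) * φ y ∂μ) ^ r
      ≤ (D * A) ^ ((r - q) / q) * ∫⁻ y, k (x - y) * φ y ^ q ∂μ := by
    calc (∫⁻ y, k (x - y) * φ y ∂μ) ^ r
        = ((∫⁻ y, k (x - y) * φ y ∂μ) ^ q) ^ ((r - q) / q)
            * (∫⁻ y, k (x - y) * φ y ∂μ) ^ q := by
          rw [← ENNReal.rpow_mul, mul_div_cancel₀ _ hq₀.ne',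
            ← ENNReal.rpow_add_of_nonneg _ _ (sub_nonneg.2 hqr) hq₀.le, sub_add_cancel]
      _ ≤ _ := mul_le_mul'
          (ENNReal.rpow_le_rpow ((hjensen x).trans (hsup x)) hrq) (hjensen x)
  have hm : Measurable fun p : G × G ↦ k (p.1 - p.2) * φ p.2 ^ q :=
    (hk.comp measurable_sub).mul ((hφ.comp measurable_snd).pow_const q)
  rw [← ENNReal.rpow_le_rpow_iff hr₀, eLpNorm_ofReal_rpow hr₀]
  calc ∫⁻ x, (∫⁻ y, k (x - y) * φ y ∂μ) ^ r ∂μ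
      ≤ (D * A) ^ ((r - q) / q) * A := by
        refine (lintegral_mono hpoint).trans ?_
        rw [lintegral_const_mul _ hm.lintegral_prod_right']
        exact mul_le_mul_right (lintegral_lintegral_conv_le hk (hφ.pow_const q) hk₁) _
    _ = D ^ ((r - q) / q) * A ^ (r / q) := by
        rw [ENNReal.mul_rpow_of_nonneg _ _ hrq, mul_assoc]
        nth_rewrite 2 [← ENNReal.rpow_one A]
        rw [← ENNReal.rpow_add_of_nonneg _ _ hrq zero_le_one, sub_div, div_self hq₀.ne',
          sub_add_cancel]
    _ = (D ^ (1 / q - 1 / r) * eLpNorm φ (ENNReal.ofReal q) μ) ^ r := by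
        have hA : A = eLpNorm φ (ENNReal.ofReal q) μ ^ q := (eLpNorm_ofReal_rpow hq₀ φ).symm
        rw [ENNReal.mul_rpow_of_nonneg _ _ hr₀.le, hA, ← ENNReal.rpow_mul, ← ENNReal.rpow_mul,
          mul_div_cancel₀ _ hq₀.ne']
        congr 2
        field_simp

end Young

section Smoothing

variable {n : ℕ} {α q r σ : ℝ}

/-- A bound for the norm of the fractional heat semigroup at time `t` as an operator from `L^q` to
`L^r`, where `σ = 1/q - 1/r`: the power `σ` of the supremum bound on the kernel, extended by zero to
`t ≤ 0`. -/
def smoothingFactor (n : ℕ) (α σ : ℝ) : ℝ → ℝ≥0∞ :=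
  (Ioi 0).indicator fun t ↦
    ENNReal.ofReal (t ^ (-(n / (2 * α))) * ∫ ξ : Rn n, ‖heatSymbol n α 1 ξ‖) ^ σ

theorem measurable_smoothingFactor : Measurable (smoothingFactor n α σ) :=
  Measurable.indicator (by fun_prop) measurableSet_Ioi

theorem smoothingFactor_zero_le_one (t : ℝ) : smoothingFactor n α 0 t ≤ 1 := by
  simp only [smoothingFactor, ENNReal.rpow_zero]
  exact indicator_le_self _ _ t

theorem eLpNorm_smoothingFactor_lt_top (hσ : 0 ≤ σ) (hr : 0 < r)
    (hθ : n / (2 * α) * (σ * r) < 1) (T : ℝ) :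
    eLpNorm (smoothingFactor n α σ) (ENNReal.ofReal r) (volume.restrict (Ioc 0 T)) < ∞ := by
  rcases lt_or_ge T 0 with hT | hT
  · rw [Ioc_eq_empty hT.not_gt, Measure.restrict_empty, eLpNorm_measure_zero]
    exact ENNReal.zero_lt_top
  set M := ∫ ξ : Rn n, ‖heatSymbol n α 1 ξ‖
  have hM : 0 ≤ M := integral_nonneg fun ξ ↦ norm_nonneg _
  have hint : IntegrableOn (fun t : ℝ ↦ t ^ (-(n / (2 * α) * (σ * r))) * M ^ (σ * r))
      (Ioc 0 T) := by
    rw [← intervalIntegrable_iff_integrableOn_Ioc_of_le hT]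
    exact (intervalIntegral.intervalIntegrable_rpow' (neg_lt_neg hθ)).mul_const _
  rw [← ENNReal.rpow_lt_top_iff_of_pos hr, eLpNorm_ofReal_rpow hr]
  refine (setLIntegral_congr_fun measurableSet_Ioc fun t ht ↦ ?_).trans_lt hint.lintegral_lt_top
  have ht₀ : 0 ≤ t := ht.1.le
  rw [enorm_eq_self, smoothingFactor, indicator_of_mem (mem_Ioi.2 ht.1), ← ENNReal.rpow_mul,
    ENNReal.ofReal_rpow_of_nonneg (by positivity) (mul_nonneg hσ hr.le),
    Real.mul_rpow (by positivity) hM, ← Real.rpow_mul ht₀, neg_mul]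

theorem eLpNorm_smoothingFactor_comp_sub_le {s T : ℝ} (hs : 0 ≤ s) :
    eLpNorm (fun t ↦ smoothingFactor n α σ (t - s)) (ENNReal.ofReal r)
        (volume.restrict (Ioc 0 T))
      ≤ eLpNorm (smoothingFactor n α σ) (ENNReal.ofReal r) (volume.restrict (Ioc 0 T)) := by
  have hm : Measurable ((Ioc 0 T).indicator (smoothingFactor n α σ)) :=
    measurable_smoothingFactor.indicator measurableSet_Ioc
  have hsupp : ∀ t ∈ Ioc 0 T, smoothingFactor n α σ (t - s)
      = (Ioc 0 T).indicator (smoothingFactor n α σ) (t - s) := by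
    intro t ht
    rcases le_or_gt t s with hts | hts
    · have hneg : ¬0 < t - s := (sub_nonpos.2 hts).not_gt
      rw [smoothingFactor, indicator_of_notMem (mt mem_Ioi.1 hneg),
        indicator_of_notMem fun h ↦ hneg h.1]
    · have hmem : t - s ∈ Ioc 0 T := ⟨sub_pos.2 hts, (sub_le_self _ hs).trans ht.2⟩
      rw [indicator_of_mem hmem]
  calc eLpNorm (fun t ↦ smoothingFactor n α σ (t - s)) (ENNReal.ofReal r)
        (volume.restrict (Ioc 0 T))
      = eLpNorm ((Ioc 0 T).indicator (smoothingFactor n α σ) ∘ fun t ↦ t - s) (ENNReal.ofReal r)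
        (volume.restrict (Ioc 0 T)) :=
        eLpNorm_congr_ae ((ae_restrict_mem measurableSet_Ioc).mono hsupp)
    _ ≤ eLpNorm ((Ioc 0 T).indicator (smoothingFactor n α σ) ∘ fun t ↦ t - s) (ENNReal.ofReal r)
        volume := eLpNorm_mono_measure _ Measure.restrict_le_self
    _ = eLpNorm ((Ioc 0 T).indicator (smoothingFactor n α σ)) (ENNReal.ofReal r) volume :=
        eLpNorm_comp_measurePreserving hm.aestronglyMeasurable
          (measurePreserving_sub_right volume s)
    _ = _ := eLpNorm_indicator_eq_eLpNorm_restrict measurableSet_Ioc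

theorem eLpNorm_lintegral_heatDensity_mul_le (hα : 0 < α ∧ α ≤ 1) {φ : Rn n → ℝ≥0∞}
    (hφ : Measurable φ) (hq : 1 ≤ q) (hqr : q ≤ r) (t s : ℝ) :
    eLpNorm (fun x ↦ ∫⁻ y, heatDensity n α 0 (t, x) (s, y) * φ y) (ENNReal.ofReal r) volume
      ≤ smoothingFactor n α (1 / q - 1 / r) (t - s) * eLpNorm φ (ENNReal.ofReal q) volume := by
  rcases lt_or_ge s t with hst | hst
  · simp only [heatDensity_zero_of_lt (z := (t, _)) (w := (s, _)) hst]
    rw [smoothingFactor, indicator_of_mem (mem_Ioi.2 (sub_pos.2 hst))]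
    exact eLpNorm_conv_le measurable_gKer.of_uncurry_left.ennreal_ofReal hφ
      (lintegral_gKer_le_one hα (sub_pos.2 hst))
      (fun x ↦ ENNReal.ofReal_le_ofReal (gKer_le hα.1 (sub_pos.2 hst) x)) hq hqr
  · simp only [heatDensity_of_le (z := (t, _)) (w := (s, _)) hst, zero_mul, lintegral_zero]
    exact eLpNorm_zero'.trans_le zero_le

variable {τ : Measure ℝ} [SFinite τ] {φ : ℝ × Rn n → ℝ≥0∞}

theorem lintegral_heatPotential_eq_lintegral_lintegral (hφ : Measurable φ) (z : ℝ × Rn n) :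
    ∫⁻ w, φ w ∂heatPotential n α τ 0 z
      = ∫⁻ s, ∫⁻ y, heatDensity n α 0 z (s, y) * φ (s, y) ∂volume ∂τ := by
  rw [lintegral_heatPotential _ hφ, lintegral_prod _
    (measurable_heatDensity.of_uncurry_left.fun_mul hφ).aemeasurable]

theorem measurable_lintegral_heatDensity_mul (hφ : Measurable φ) :
    Measurable (Function.uncurry fun (s : ℝ) (z : ℝ × Rn n) ↦
      ∫⁻ y, heatDensity n α 0 z (s, y) * φ (s, y)) := by
  refine Measurable.lintegral_prod_right' (f := fun p : (ℝ × ℝ × Rn n) × Rn n ↦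
    heatDensity n α 0 p.1.2 (p.1.1, p.2) * φ (p.1.1, p.2)) (Measurable.mul ?_ (by fun_prop))
  exact measurable_heatDensity.comp (f := fun p : (ℝ × ℝ × Rn n) × Rn n ↦
    (p.1.2, (p.1.1, p.2))) (by fun_prop)

theorem eLpNorm_lintegral_heatPotential_le (hα : 0 < α ∧ α ≤ 1) (hφ : Measurable φ) (hq : 1 ≤ q)
    (t : ℝ) :
    eLpNorm (fun x ↦ ∫⁻ w, φ w ∂heatPotential n α τ 0 (t, x)) (ENNReal.ofReal q) volume
      ≤ ∫⁻ s, eLpNorm (fun y ↦ φ (s, y)) (ENNReal.ofReal q) volume ∂τ := by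
  simp only [lintegral_heatPotential_eq_lintegral_lintegral hφ]
  have hm : Measurable (Function.uncurry fun (s : ℝ) (x : Rn n) ↦
      ∫⁻ y, heatDensity n α 0 (t, x) (s, y) * φ (s, y)) :=
    (measurable_lintegral_heatDensity_mul hφ).comp (f := fun p : ℝ × Rn n ↦ (p.1, (t, p.2)))
      (by fun_prop)
  refine (eLpNorm_lintegral_le hq hm).trans (lintegral_mono fun s ↦ ?_)
  refine (eLpNorm_lintegral_heatDensity_mul_le hα (hφ.comp measurable_prodMk_left) hq le_rfl
    t s).trans (mul_le_of_le_one_left zero_le ?_)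
  rw [sub_self]
  exact smoothingFactor_zero_le_one _

theorem eLpNorm_lintegral_heatPotential_prod_le (hα : 0 < α ∧ α ≤ 1) (hφ : Measurable φ)
    (hq : 1 ≤ q) (hqr : q ≤ r) (hτ : ∀ᵐ s ∂τ, 0 ≤ s) (T : ℝ) :
    eLpNorm (fun z ↦ ∫⁻ w, φ w ∂heatPotential n α τ 0 z) (ENNReal.ofReal r)
        ((volume.restrict (Ioc 0 T)).prod volume)
      ≤ eLpNorm (smoothingFactor n α (1 / q - 1 / r)) (ENNReal.ofReal r)
          (volume.restrict (Ioc 0 T))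
        * ∫⁻ s, eLpNorm (fun y ↦ φ (s, y)) (ENNReal.ofReal q) volume ∂τ := by
  have hq₀ : 0 < q := zero_lt_one.trans_le hq
  have hr₀ : 0 < r := hq₀.trans_le hqr
  simp only [lintegral_heatPotential_eq_lintegral_lintegral hφ]
  refine (eLpNorm_lintegral_le (hq.trans hqr) (measurable_lintegral_heatDensity_mul hφ)).trans ?_
  have hN : Measurable fun s ↦ eLpNorm (fun y ↦ φ (s, y)) (ENNReal.ofReal q) volume :=
    measurable_eLpNorm_ofReal hq₀ hφ
  rw [← lintegral_const_mul _ hN]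
  refine lintegral_mono_ae (hτ.mono fun s hs ↦ ?_)
  have hslice : Measurable fun z : ℝ × Rn n ↦ ∫⁻ y, heatDensity n α 0 z (s, y) * φ (s, y) :=
    (measurable_lintegral_heatDensity_mul hφ).of_uncurry_left
  have hfactor : Measurable fun t ↦ smoothingFactor n α (1 / q - 1 / r) (t - s) :=
    measurable_smoothingFactor.comp (measurable_id.sub measurable_const)
  rw [eLpNorm_ofReal_prod hr₀ hslice]
  calc _ ≤ eLpNorm (fun t ↦ smoothingFactor n α (1 / q - 1 / r) (t - s)
        * eLpNorm (fun y ↦ φ (s, y)) (ENNReal.ofReal q) volume) (ENNReal.ofReal r)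
          (volume.restrict (Ioc 0 T)) :=
        eLpNorm_mono_enorm fun t ↦ eLpNorm_lintegral_heatDensity_mul_le hα
          (hφ.comp measurable_prodMk_left) hq hqr t s
    _ ≤ _ := by
        rw [eLpNorm_mul_const_ennreal hr₀ hfactor]
        exact mul_le_mul_left (eLpNorm_smoothingFactor_comp_sub_le hs) _

end Smoothing

section Duhamel

variable {n b : ℕ} {α T : ℝ} {z : ℝ × Rn n} {h : ℝ × Rn n → ℝ} {f : ℝ → Rn n → ℝ} {u₀ : Rn n → ℝ}
  {u : ℝ → Rn n → ℝ}

theorem toReal_heatDensity_zero (hα : 0 < α ∧ α ≤ 1) {w : ℝ × Rn n} (hw : w.1 < z.1) :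
    (heatDensity n α 0 z w).toReal = gKer n α (z.1 - w.1) (z.2 - w.2) := by
  rw [heatDensity_zero_of_lt hw, ENNReal.toReal_ofReal (gKer_nonneg hα (sub_pos.2 hw) _)]

theorem integrable_heatPotential_iff {τ : Measure ℝ} [SFinite τ] {k : ℝ≥0} :
    Integrable h (heatPotential n α τ k z) ↔
      Integrable (fun w ↦ (heatDensity n α k z w).toReal * h w) (τ.prod volume) := by
  rw [heatPotential_apply, integrable_withDensity_iff_integrable_smul'
    measurable_heatDensity.of_uncurry_left (ae_of_all _ fun _ ↦ heatDensity_ne_top.lt_top)]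
  rfl

theorem integral_heatPotential {τ : Measure ℝ} [SFinite τ] {k : ℝ≥0} :
    ∫ w, h w ∂heatPotential n α τ k z
      = ∫ w, (heatDensity n α k z w).toReal * h w ∂τ.prod volume := by
  rw [heatPotential_apply, integral_withDensity_eq_integral_toReal_smul
    measurable_heatDensity.of_uncurry_left (ae_of_all _ fun _ ↦ heatDensity_ne_top.lt_top)]
  rfl

theorem restrict_Ioc_prod_volume (t : ℝ) :
    (volume.restrict (Ioc 0 t)).prod (volume : Measure (Rn n))
      = (volume.prod volume).restrict (Ioc 0 t ×ˢ univ) := by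
  rw [← Measure.prod_restrict, Measure.restrict_univ]

theorem toReal_heatDensity_mul_ae_eq (hα : 0 < α ∧ α ≤ 1) :
    (fun w ↦ (heatDensity n α 0 z w).toReal * h w) =ᵐ[(volume.restrict (Ioc 0 z.1)).prod volume]
      fun w ↦ gKer n α (z.1 - w.1) (z.2 - w.2) * h w := by
  rw [← restrict_Ioo_eq_restrict_Ioc]
  filter_upwards [Measure.quasiMeasurePreserving_fst.ae (ae_restrict_mem measurableSet_Ioo)]
    with w hw
  rw [toReal_heatDensity_zero hα hw.2]

theorem integrable_heatPotential_Ioi_iff (hα : 0 < α ∧ α ≤ 1) :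
    Integrable h (heatPotential n α (volume.restrict (Ioi 0)) 0 z) ↔
      IntegrableOn (fun w ↦ gKer n α (z.1 - w.1) (z.2 - w.2) * h w) (Ioc 0 z.1 ×ˢ univ)
        (volume.prod volume) := by
  rw [← heatPotential_restrict_Ioc_apply le_rfl, integrable_heatPotential_iff,
    integrable_congr (toReal_heatDensity_mul_ae_eq hα), restrict_Ioc_prod_volume, IntegrableOn]

theorem integral_heatPotential_Ioi (hα : 0 < α ∧ α ≤ 1)
    (hh : Integrable h (heatPotential n α (volume.restrict (Ioi 0)) 0 z)) :
    ∫ w, h w ∂heatPotential n α (volume.restrict (Ioi 0)) 0 z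
      = ∫ s in Ioc 0 z.1, conv n (gKer n α (z.1 - s)) (fun y ↦ h (s, y)) z.2 := by
  rw [← heatPotential_restrict_Ioc_apply le_rfl, integral_heatPotential,
    integral_congr_ae (toReal_heatDensity_mul_ae_eq hα), restrict_Ioc_prod_volume,
    setIntegral_prod _ ((integrable_heatPotential_Ioi_iff hα).1 hh)]
  simp only [Measure.restrict_univ, conv]

theorem integrable_heatPotential_dirac_iff (hα : 0 < α ∧ α ≤ 1) (hz : 0 < z.1)
    (hm : Measurable h) :
    Integrable h (heatPotential n α (Measure.dirac 0) 0 z) ↔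
      Integrable fun y ↦ gKer n α z.1 (z.2 - y) * h (0, y) := by
  rw [integrable_heatPotential_iff, Measure.dirac_prod, integrable_map_measure
    (measurable_heatDensity.of_uncurry_left.ennreal_toReal.fun_mul hm).aestronglyMeasurable
    measurable_prodMk_left.aemeasurable]
  refine iff_of_eq (congrArg (Integrable · volume) (funext fun y ↦ ?_))
  rw [Function.comp_apply, toReal_heatDensity_zero (w := (0, y)) hα hz, sub_zero]

theorem integral_heatPotential_dirac (hα : 0 < α ∧ α ≤ 1) (hz : 0 < z.1) (hm : Measurable h) :
    ∫ w, h w ∂heatPotential n α (Measure.dirac 0) 0 z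
      = conv n (gKer n α z.1) (fun y ↦ h (0, y)) z.2 := by
  rw [integral_heatPotential, Measure.dirac_prod, integral_map measurable_prodMk_left.aemeasurable
    (measurable_heatDensity.of_uncurry_left.ennreal_toReal.fun_mul hm).aestronglyMeasurable]
  refine integral_congr_ae (ae_of_all _ fun y ↦ ?_)
  simp only [toReal_heatDensity_zero (w := (0, y)) hα hz, sub_zero]

/-- The time measure carrying both the source term, on `(0, T]`, and the initial datum, at time
`0`. -/
abbrev dataTime (T : ℝ) : Measure ℝ := volume.restrict (Ioc 0 T) + Measure.dirac 0

/-- The source term `f`, with the initial datum `u₀` placed at times `s ≤ 0`; its heat potential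
for `dataTime` is the solution of the linear equation. -/
def dataFun (f : ℝ → Rn n → ℝ) (u₀ : Rn n → ℝ) (w : ℝ × Rn n) : ℝ :=
  if w.1 ≤ 0 then u₀ w.2 else f w.1 w.2

theorem dataFun_zero (y : Rn n) : dataFun f u₀ (0, y) = u₀ y := if_pos le_rfl

theorem dataFun_of_pos {s : ℝ} (hs : 0 < s) (y : Rn n) : dataFun f u₀ (s, y) = f s y :=
  if_neg hs.not_ge

theorem measurable_dataFun (hf : Measurable (Function.uncurry f)) (hu₀ : Measurable u₀) :
    Measurable (dataFun f u₀) :=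
  Measurable.ite (measurableSet_le measurable_fst measurable_const)
    (hu₀.comp measurable_snd) hf

theorem ae_dataTime_nonneg : ∀ᵐ s ∂dataTime T, 0 ≤ s :=
  ae_add_measure_iff.2 ⟨(ae_restrict_mem measurableSet_Ioc).mono fun _ hs ↦ hs.1.le,
    (ae_dirac_iff measurableSet_Ici).2 le_rfl⟩

theorem heatPotential_dataTime (hz : z.1 ≤ T) : heatPotential n α (dataTime T) 0 z
    = heatPotential n α (volume.restrict (Ioi 0)) 0 z
      + heatPotential n α (Measure.dirac 0) 0 z := by
  rw [← heatPotential_restrict_Ioc_apply hz, heatPotential_apply, heatPotential_apply,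
    heatPotential_apply, Measure.add_prod, withDensity_add_measure]

theorem integrable_dataFun_Ioi_iff (hα : 0 < α ∧ α ≤ 1) :
    Integrable (dataFun f u₀) (heatPotential n α (volume.restrict (Ioi 0)) 0 z) ↔
      IntegrableOn (fun w : ℝ × Rn n ↦ gKer n α (z.1 - w.1) (z.2 - w.2) * f w.1 w.2)
        (Ioc 0 z.1 ×ˢ univ) (volume.prod volume) := by
  rw [integrable_heatPotential_Ioi_iff hα]
  refine integrableOn_congr_fun (fun w hw ↦ ?_) (measurableSet_Ioc.prod MeasurableSet.univ)
  simp only [← dataFun_of_pos (f := f) (u₀ := u₀) hw.1.1 w.2, Prod.mk.eta]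

theorem integrable_dataFun_dirac_iff (hα : 0 < α ∧ α ≤ 1) (hz : 0 < z.1)
    (hf : Measurable (Function.uncurry f)) (hu₀ : Measurable u₀) :
    Integrable (dataFun f u₀) (heatPotential n α (Measure.dirac 0) 0 z) ↔
      Integrable fun y ↦ gKer n α z.1 (z.2 - y) * u₀ y := by
  rw [integrable_heatPotential_dirac_iff hα hz (measurable_dataFun hf hu₀)]
  simp only [dataFun_zero]

theorem integral_dataFun (hα : 0 < α ∧ α ≤ 1) (hz : z.1 ∈ Ioc 0 T)
    (hf : Measurable (Function.uncurry f)) (hu₀ : Measurable u₀)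
    (hint : Integrable (dataFun f u₀) (heatPotential n α (dataTime T) 0 z)) :
    ∫ w, dataFun f u₀ w ∂heatPotential n α (dataTime T) 0 z
      = conv n (gKer n α z.1) u₀ z.2
        + ∫ s in Ioc 0 z.1, conv n (gKer n α (z.1 - s)) (f s) z.2 := by
  rw [heatPotential_dataTime hz.2, integrable_add_measure] at hint
  rw [heatPotential_dataTime hz.2, integral_add_measure hint.1 hint.2,
    integral_heatPotential_dirac hα hz.1 (measurable_dataFun hf hu₀),
    integral_heatPotential_Ioi hα hint.1, add_comm]
  simp only [dataFun_zero]
  congr 1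
  exact setIntegral_congr_fun measurableSet_Ioc fun s hs ↦ by simp only [dataFun_of_pos hs.1]

theorem ae_restrict_prod_fst_mem {S : Set ℝ} (hS : MeasurableSet S) :
    ∀ᵐ z ∂(volume.restrict S).prod (volume : Measure (Rn n)), z.1 ∈ S :=
  Measure.quasiMeasurePreserving_fst.ae (ae_restrict_mem hS)

theorem isMildSol0_iff (hα : 0 < α ∧ α ≤ 1) (hf : Measurable (Function.uncurry f))
    (hu₀ : Measurable u₀)
    (hint : ∀ᵐ z ∂(volume.restrict (Ioc 0 T)).prod volume,
      Integrable (dataFun f u₀) (heatPotential n α (dataTime T) 0 z)) :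
    IsMildSol0 n α b (Ioc 0 T) f u₀ u ↔ ∀ᵐ z ∂(volume.restrict (Ioc 0 T)).prod volume,
      Integrable (fun w : ℝ × Rn n ↦ |u w.1 w.2| ^ b * u w.1 w.2)
        (heatPotential n α (volume.restrict (Ioi 0)) 0 z) ∧
      u z.1 z.2 + ∫ w : ℝ × Rn n, |u w.1 w.2| ^ b * u w.1 w.2
          ∂heatPotential n α (volume.restrict (Ioi 0)) 0 z
        = ∫ w, dataFun f u₀ w ∂heatPotential n α (dataTime T) 0 z := by
  refine eventually_congr ?_
  filter_upwards [hint, ae_restrict_prod_fst_mem measurableSet_Ioc] with z hz hzT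
  rw [integral_dataFun hα hzT hf hu₀ hz, ← integrable_dataFun_Ioi_iff (u₀ := u₀) hα,
    ← integrable_dataFun_dirac_iff hα hzT.1 hf hu₀]
  rw [heatPotential_dataTime hzT.2, integrable_add_measure] at hz
  rw [← integrable_heatPotential_Ioi_iff (h := fun w ↦ |u w.1 w.2| ^ b * u w.1 w.2) hα]
  simp only [hz, true_and]
  refine and_congr_right fun hu ↦ ?_
  rw [integral_heatPotential_Ioi hα hu, eq_sub_iff_add_eq]

end Duhamel

section Nonlinearity

theorem pow_le_one_add_rpow {m : ℕ} {r : ℝ} (hr : m ≤ r) (a : ℝ≥0∞) : a ^ m ≤ 1 + a ^ r := by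
  rcases le_total a 1 with h | h
  · exact (pow_le_one₀ zero_le h).trans le_self_add
  · rw [← ENNReal.rpow_natCast]
    exact (ENNReal.rpow_le_rpow_of_exponent_le h hr).trans le_add_self

theorem monotone_abs_pow_mul (b : ℕ) : Monotone fun x : ℝ ↦ |x| ^ b * x := by
  refine monotone_of_odd_of_monotoneOn_nonneg (fun x ↦ by simp only [abs_neg, mul_neg])
    fun x hx y hy hxy ↦ ?_
  simp only [abs_of_nonneg (mem_Ici.1 hx), abs_of_nonneg (mem_Ici.1 hy)]
  exact mul_le_mul (pow_le_pow_left₀ hx hxy b) hxy hx (pow_nonneg hy b)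

theorem locallyLipschitz_abs_pow_mul (b : ℕ) : LocallyLipschitz fun x : ℝ ↦ |x| ^ b * x := by
  have hpoly : ContDiff ℝ 1 fun p : ℝ × ℝ ↦ p.1 ^ b * p.2 := by fun_prop
  have habs : LipschitzWith 1 fun x : ℝ ↦ |x| := lipschitzWith_one_norm
  exact hpoly.locallyLipschitz.comp (habs.locallyLipschitz.prodMk LocallyLipschitz.id)

theorem abs_pow_mul_sub_neg (b : ℕ) {a : ℝ} (ha : 0 ≤ a) :
    |a| ^ b * a - |-a| ^ b * -a = 2 * a ^ (b + 1) := by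
  rw [abs_neg, abs_of_nonneg ha]
  ring

end Nonlinearity

section LinearMajorant

variable {n m : ℕ} {α q r T : ℝ} {f : ℝ → Rn n → ℝ} {u₀ : Rn n → ℝ}

/-- The solution of the linear equation with data `|f|` and `|u₀|`, which dominates the solution of
the damped equation. -/
def linearMajorant (n : ℕ) (α T : ℝ) (f : ℝ → Rn n → ℝ) (u₀ : Rn n → ℝ) (z : ℝ × Rn n) : ℝ≥0∞ :=
  ∫⁻ w, ‖dataFun f u₀ w‖ₑ ∂heatPotential n α (dataTime T) 0 z

theorem lintegral_eLpNorm_dataFun :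
    ∫⁻ s, eLpNorm (fun y ↦ ‖dataFun f u₀ (s, y)‖ₑ) (ENNReal.ofReal q) volume ∂dataTime T
      = (∫⁻ s in Ioc 0 T, eLpNorm (f s) (ENNReal.ofReal q) volume)
        + eLpNorm u₀ (ENNReal.ofReal q) volume := by
  simp only [eLpNorm_enorm]
  rw [lintegral_add_measure, lintegral_dirac]
  simp only [dataFun_zero]
  congr 1
  exact setLIntegral_congr_fun measurableSet_Ioc fun s hs ↦ by simp only [dataFun_of_pos hs.1]

theorem measurable_linearMajorant (hf : Measurable (Function.uncurry f)) (hu₀ : Measurable u₀) :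
    Measurable (linearMajorant n α T f u₀) :=
  (measurable_dataFun hf hu₀).enorm.lintegral_kernel

theorem eLpNorm_linearMajorant_le (hα : 0 < α ∧ α ≤ 1) (hf : Measurable (Function.uncurry f))
    (hu₀ : Measurable u₀) (hq : 1 ≤ q) (t : ℝ) :
    eLpNorm (fun x ↦ linearMajorant n α T f u₀ (t, x)) (ENNReal.ofReal q) volume
      ≤ (∫⁻ s in Ioc 0 T, eLpNorm (f s) (ENNReal.ofReal q) volume)
        + eLpNorm u₀ (ENNReal.ofReal q) volume := by
  rw [← lintegral_eLpNorm_dataFun]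
  exact eLpNorm_lintegral_heatPotential_le hα (measurable_dataFun hf hu₀).enorm hq t

theorem lintegral_linearMajorant_rpow_lt_top (hα : 0 < α ∧ α ≤ 1)
    (hf : Measurable (Function.uncurry f)) (hu₀ : Measurable u₀) (hq : 1 ≤ q) (hqr : q ≤ r)
    (hr : n / (2 * α) * ((r - q) / q) < 1)
    (hu₀q : eLpNorm u₀ (ENNReal.ofReal q) volume < ∞)
    (hfq : ∫⁻ s in Ioc 0 T, eLpNorm (f s) (ENNReal.ofReal q) volume < ∞) :
    ∫⁻ z, linearMajorant n α T f u₀ z ^ r ∂(volume.restrict (Ioc 0 T)).prod volume < ∞ := by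
  have hq₀ : 0 < q := zero_lt_one.trans_le hq
  have hr₀ : 0 < r := hq₀.trans_le hqr
  have hσ : 0 ≤ 1 / q - 1 / r := sub_nonneg.2 (one_div_le_one_div_of_le hq₀ hqr)
  have hθ : n / (2 * α) * ((1 / q - 1 / r) * r) < 1 := by
    convert hr using 2
    field_simp
  have hbound := eLpNorm_lintegral_heatPotential_prod_le hα (measurable_dataFun hf hu₀).enorm
    hq hqr (ae_dataTime_nonneg (T := T)) T
  rw [lintegral_eLpNorm_dataFun] at hbound
  have hfin := hbound.trans_lt (ENNReal.mul_lt_top (eLpNorm_smoothingFactor_lt_top hσ hr₀ hθ T)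
    (ENNReal.add_lt_top.2 ⟨hfq, hu₀q⟩))
  rwa [← ENNReal.rpow_lt_top_iff_of_pos hr₀, eLpNorm_ofReal_rpow hr₀] at hfin

theorem ae_lintegral_heatPotential_lt_top (hα : 0 < α ∧ α ≤ 1) {φ : ℝ × Rn n → ℝ≥0∞}
    (hφ : Measurable φ) (hfin : ∫⁻ w, φ w ∂(volume.restrict (Ioc 0 T)).prod volume < ∞) :
    ∀ᵐ z ∂(volume.restrict (Ioc 0 T)).prod volume,
      ∫⁻ w, φ w ∂heatPotential n α (volume.restrict (Ioi 0)) 0 z < ∞ := by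
  have hτ : ∀ᵐ s ∂volume.restrict (Ioc 0 T), 0 ≤ s :=
    (ae_restrict_mem measurableSet_Ioc).mono fun _ hs ↦ hs.1.le
  have hbound := eLpNorm_lintegral_heatPotential_prod_le hα hφ le_rfl le_rfl hτ T
  have hfactor := eLpNorm_smoothingFactor_lt_top (n := n) (α := α) (σ := 1 / 1 - 1 / 1) (r := 1)
    (sub_self _).ge one_pos (by norm_num) T
  simp only [ENNReal.ofReal_one, eLpNorm_one_eq_lintegral_enorm, enorm_eq_self] at hbound hfactor
  rw [← lintegral_prod _ hφ.aemeasurable] at hbound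
  filter_upwards [ae_lt_top hφ.lintegral_kernel
    (hbound.trans_lt (ENNReal.mul_lt_top hfactor hfin)).ne, ae_restrict_prod_fst_mem
    measurableSet_Ioc] with z hz hzT
  rwa [← heatPotential_restrict_Ioc_apply hzT.2]

theorem ae_lintegral_linearMajorant_pow_lt_top (hα : 0 < α ∧ α ≤ 1)
    (hf : Measurable (Function.uncurry f)) (hu₀ : Measurable u₀) (hmr : m ≤ r)
    (hfin : ∫⁻ z, linearMajorant n α T f u₀ z ^ r ∂(volume.restrict (Ioc 0 T)).prod volume < ∞) :
    ∀ᵐ z ∂(volume.restrict (Ioc 0 T)).prod volume, ∫⁻ w, linearMajorant n α T f u₀ w ^ m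
      ∂heatPotential n α (volume.restrict (Ioi 0)) 0 z < ∞ := by
  filter_upwards [ae_lintegral_heatPotential_lt_top hα
    ((measurable_linearMajorant hf hu₀).pow_const r) hfin] with z hz
  have := isFiniteMeasure_heatPotential (z := z) hα
  refine (lintegral_mono fun w ↦ pow_le_one_add_rpow hmr _).trans_lt ?_
  rw [lintegral_add_left measurable_const, lintegral_one]
  exact ENNReal.add_lt_top.2 ⟨measure_lt_top _ _, hz⟩

theorem ae_linearMajorant_lt_top (hf : Measurable (Function.uncurry f)) (hu₀ : Measurable u₀)
    (hr : 0 < r)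
    (hfin : ∫⁻ z, linearMajorant n α T f u₀ z ^ r ∂(volume.restrict (Ioc 0 T)).prod volume < ∞) :
    ∀ᵐ z ∂(volume.restrict (Ioc 0 T)).prod volume, linearMajorant n α T f u₀ z < ∞ := by
  filter_upwards [ae_lt_top ((measurable_linearMajorant hf hu₀).pow_const r) hfin.ne] with z hz
  exact (ENNReal.rpow_lt_top_iff_of_pos hr).1 hz

theorem ae_integrable_dataFun (hf : Measurable (Function.uncurry f)) (hu₀ : Measurable u₀)
    (hfin : ∀ᵐ z ∂(volume.restrict (Ioc 0 T)).prod volume, linearMajorant n α T f u₀ z < ∞) :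
    ∀ᵐ z ∂(volume.restrict (Ioc 0 T)).prod volume,
      Integrable (dataFun f u₀) (heatPotential n α (dataTime T) 0 z) :=
  hfin.mono fun _ hz ↦ ⟨(measurable_dataFun hf hu₀).aestronglyMeasurable, hz⟩

end LinearMajorant

section WellPosedness

variable {n b : ℕ} {α q T : ℝ} {f : ℝ → Rn n → ℝ} {u₀ : Rn n → ℝ}

theorem eNormT_le_max_one_mul {p : ℝ → ℝ} (hp : ∀ t ∈ Ioc 0 T, 1 ≤ p t) {u : ℝ → Rn n → ℝ}
    {M : ℝ≥0∞} (hM : 0 < M)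
    (hu : ∀ᵐ t ∂volume.restrict (Ioc 0 T), eLpNorm (u t) (ENNReal.ofReal q) volume ≤ M) :
    eNormT n p q T u ≤ max 1 (ENNReal.ofReal T) * M := by
  have hD : max 1 (ENNReal.ofReal T) ≠ 0 := (zero_lt_one.trans_le (le_max_left _ _)).ne'
  have hD' : max 1 (ENNReal.ofReal T) ≠ ∞ := max_ne_top ENNReal.one_ne_top ENNReal.ofReal_ne_top
  refine sInf_le ⟨ENNReal.mul_pos hD hM.ne', ?_⟩
  calc _ ≤ ∫⁻ _ in Ioc 0 T, (max 1 (ENNReal.ofReal T))⁻¹ := by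
        refine lintegral_mono_ae ?_
        filter_upwards [hu, ae_restrict_mem measurableSet_Ioc] with t ht htT
        have hle : eLpNorm (u t) (ENNReal.ofReal q) volume / (max 1 (ENNReal.ofReal T) * M)
            ≤ (max 1 (ENNReal.ofReal T))⁻¹ := by
          refine ENNReal.div_le_of_le_mul ?_
          rwa [← mul_assoc, ENNReal.inv_mul_cancel hD hD', one_mul]
        exact (ENNReal.rpow_le_self_of_le_one (hle.trans
          (ENNReal.inv_le_one.2 (le_max_left _ _))) (hp t htT)).trans hle
    _ = (max 1 (ENNReal.ofReal T))⁻¹ * ENNReal.ofReal T := by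
        rw [setLIntegral_const, Real.volume_Ioc, sub_zero]
    _ ≤ (max 1 (ENNReal.ofReal T))⁻¹ * max 1 (ENNReal.ofReal T) := by
        gcongr
        exact le_max_right _ _
    _ = 1 := ENNReal.inv_mul_cancel hD hD'

theorem isResolventPair_heatPotential_Ioi (hα : 0 < α ∧ α ≤ 1) :
    IsResolventPair (heatPotential n α (volume.restrict (Ioi 0)) 0)
      (heatPotential n α (volume.restrict (Ioi 0))) (heatPotential n α (volume.restrict (Ioi 0)) 0)
      (heatPotential n α (volume.restrict (Ioi 0))) :=
  isResolventPair_heatPotential hα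
    ((ae_restrict_mem measurableSet_Ioi).mono fun _ hs ↦ (mem_Ioi.1 hs).le)

theorem ae_heatPotential_absolutelyContinuous :
    ∀ᵐ z ∂(volume.restrict (Ioc 0 T)).prod volume,
      heatPotential n α (volume.restrict (Ioi 0)) 0 z ≪ (volume.restrict (Ioc 0 T)).prod volume :=
  (ae_restrict_prod_fst_mem measurableSet_Ioc).mono
    fun _ hz ↦ heatPotential_absolutelyContinuous hz.2

theorem exists_isMildSol0_enorm_le (hα : 0 < α ∧ α ≤ 1) (hf : Measurable (Function.uncurry f))
    (hu₀ : Measurable u₀)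
    (hfin : ∀ᵐ z ∂(volume.restrict (Ioc 0 T)).prod volume, linearMajorant n α T f u₀ z < ∞)
    (hpow : ∀ᵐ z ∂(volume.restrict (Ioc 0 T)).prod volume,
      ∫⁻ w, linearMajorant n α T f u₀ w ^ (b + 1)
        ∂heatPotential n α (volume.restrict (Ioi 0)) 0 z < ∞) :
    ∃ u : ℝ → Rn n → ℝ, Measurable (Function.uncurry u) ∧ IsMildSol0 n α b (Ioc 0 T) f u₀ u ∧
      ∀ᵐ z ∂(volume.restrict (Ioc 0 T)).prod volume,
        ‖u z.1 z.2‖ₑ ≤ linearMajorant n α T f u₀ z := by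
  have hF := measurable_dataFun hf hu₀
  have hint := ae_integrable_dataFun hf hu₀ hfin
  have hbound (z : ℝ × Rn n) : ‖∫ w, |dataFun f u₀ w| ∂heatPotential n α (dataTime T) 0 z‖ₑ
      ≤ linearMajorant n α T f u₀ z := by
    refine (enorm_integral_le_lintegral_enorm _).trans_eq ?_
    simp only [Real.enorm_abs, linearMajorant]
  have hG : ∀ᵐ z ∂(volume.restrict (Ioc 0 T)).prod volume, Integrable
      (fun x ↦ 2 * (∫ w, |dataFun f u₀ w| ∂heatPotential n α (dataTime T) 0 x) ^ (b + 1))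
      (heatPotential n α (volume.restrict (Ioi 0)) 0 z) := by
    filter_upwards [hpow] with z hz
    refine Integrable.const_mul
      ⟨(hF.abs.stronglyMeasurable.integral_kernel.pow _).aestronglyMeasurable, ?_⟩ 2
    refine (lintegral_mono fun w ↦ ?_).trans_lt hz
    rw [Pi.pow_apply, enorm_pow]
    exact pow_le_pow_left₀ zero_le (hbound w) _
  simp only [← abs_pow_mul_sub_neg b (integral_nonneg fun w ↦ abs_nonneg (dataFun f u₀ w))] at hG
  obtain ⟨u, hum, hle, hφu, heq⟩ := (isResolventPair_heatPotential_Ioi hα).exists_solution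
    (isResolventPair_heatPotential hα ae_dataTime_nonneg) ae_heatPotential_absolutelyContinuous
    (monotone_abs_pow_mul b) (mul_zero _) (locallyLipschitz_abs_pow_mul b) hF hint hG
  refine ⟨Function.curry u, hum, (isMildSol0_iff hα hf hu₀ hint).2 (hφu.and heq), ?_⟩
  filter_upwards [hle] with z hz
  exact (enorm_le_iff_norm_le.2 (hz.trans (le_abs_self _))).trans (hbound z)

theorem IsMildSol0.ae_eq (hα : 0 < α ∧ α ≤ 1) (hf : Measurable (Function.uncurry f))
    (hu₀ : Measurable u₀)
    (hfin : ∀ᵐ z ∂(volume.restrict (Ioc 0 T)).prod volume, linearMajorant n α T f u₀ z < ∞)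
    {u v : ℝ → Rn n → ℝ} (hum : Measurable (Function.uncurry u))
    (hvm : Measurable (Function.uncurry v)) (hu : IsMildSol0 n α b (Ioc 0 T) f u₀ u)
    (hv : IsMildSol0 n α b (Ioc 0 T) f u₀ v) :
    ∀ᵐ z ∂(volume.restrict (Ioc 0 T)).prod volume, u z.1 z.2 = v z.1 z.2 := by
  have hint := ae_integrable_dataFun hf hu₀ hfin
  rw [isMildSol0_iff hα hf hu₀ hint] at hu hv
  exact (isResolventPair_heatPotential_Ioi hα).ae_eq_of_add_integral_eq
    ae_heatPotential_absolutelyContinuous (monotone_abs_pow_mul b) hum hvm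
    (hu.mono fun z hz ↦ hz.1) (hv.mono fun z hz ↦ hz.1)
    (hu.mono fun z hz ↦ hz.2) (hv.mono fun z hz ↦ hz.2)

theorem smoothing_exponent_lt_one (hα : 0 < α) (hq : 1 ≤ q) (hqb : n * b / (2 * α) < q) :
    n / (2 * α) * ((max q (b + 1) - q) / q) < 1 := by
  rw [div_mul_div_comm, div_lt_one (by positivity)]
  rw [div_lt_iff₀ (by positivity)] at hqb
  rcases max_cases q ((b : ℝ) + 1) with ⟨h, -⟩ | ⟨h, -⟩
  · rw [h, sub_self, mul_zero]
    positivity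
  · rw [h]
    calc n * (b + 1 - q) ≤ n * b := by gcongr; linarith
      _ < 2 * α * q := by linarith

theorem stmt2_general (n b : ℕ) (α : ℝ) (hα : 0 < α ∧ α ≤ 1) (T : ℝ) (p : ℝ → ℝ)
    (hp : ∀ t ∈ Ioc 0 T, 1 ≤ p t) (q : ℝ) (hq1 : 1 ≤ q) (hq : (n : ℝ) * b / (2 * α) < q)
    (u₀ : Rn n → ℝ) (hu₀m : Measurable u₀) (hu₀ : eLpNorm u₀ (ENNReal.ofReal q) volume < ∞)
    (f : ℝ → Rn n → ℝ) (hfm : Measurable (Function.uncurry f))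
    (hf : ∫⁻ s in Ioc 0 T, eLpNorm (f s) (ENNReal.ofReal q) volume < ∞) :
    ∃ R > (0 : ℝ), ∃ u : ℝ → Rn n → ℝ, Measurable (Function.uncurry u) ∧
      eNormT n p q T u ≤ ENNReal.ofReal R ∧
      IsMildSol0 n α b (Ioc 0 T) f u₀ u ∧
      ∀ v : ℝ → Rn n → ℝ, Measurable (Function.uncurry v) →
        IsMildSol0 n α b (Ioc 0 T) f u₀ v →
        ∀ᵐ tx : ℝ × Rn n ∂((volume.restrict (Ioc 0 T)).prod volume),
          v tx.1 tx.2 = u tx.1 tx.2 := by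
  set M : ℝ≥0∞ := (∫⁻ s in Ioc 0 T, eLpNorm (f s) (ENNReal.ofReal q) volume)
    + eLpNorm u₀ (ENNReal.ofReal q) volume + 1
  have hM₁ : 1 ≤ M := le_add_self
  have hM' : max 1 (ENNReal.ofReal T) * M ≠ ∞ := by finiteness
  have hΛ := lintegral_linearMajorant_rpow_lt_top hα hfm hu₀m hq1 (le_max_left q (b + 1))
    (smoothing_exponent_lt_one hα.1 hq1 hq) hu₀ hf
  have hfin := ae_linearMajorant_lt_top hfm hu₀m (by positivity) hΛ
  have hpow := ae_lintegral_linearMajorant_pow_lt_top (m := b + 1) hα hfm hu₀m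
    (by push_cast; exact le_max_right _ _) hΛ
  obtain ⟨u, hum, hu, hle⟩ := exists_isMildSol0_enorm_le hα hfm hu₀m hfin hpow
  have hnorm : ∀ᵐ t ∂volume.restrict (Ioc 0 T), eLpNorm (u t) (ENNReal.ofReal q) volume ≤ M := by
    filter_upwards [Measure.ae_ae_of_ae_prod hle] with t ht
    exact ((eLpNorm_mono_enorm_ae ht).trans
      (eLpNorm_linearMajorant_le hα hfm hu₀m hq1 t)).trans le_self_add
  refine ⟨(max 1 (ENNReal.ofReal T) * M).toReal, ENNReal.toReal_pos (by positivity) hM', u, hum,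
    ?_, hu, fun v hvm hv ↦ hv.ae_eq hα hfm hu₀m hfin hvm hum hu⟩
  rw [ENNReal.ofReal_toReal hM']
  exact eNormT_le_max_one_mul hp (one_pos.trans_le hM₁) hnorm

end WellPosedness

end

/-- Local well-posedness (γ = 0) in `L^{p(·)}([0,T], L^q(ℝ^n))`. -/
theorem stmt2 (n b : ℕ) (hn : 1 ≤ n) (hb : 1 ≤ b) (α : ℝ) (hα : 1/2 < α ∧ α ≤ 1)
    (p : ℝ → ℝ) (hplog : IsPLog (Ici (0:ℝ)) p)
    (hpminus : ∃ pm : ℝ, (b:ℝ) + 1 < pm ∧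
      ∀ᵐ t ∂(volume.restrict (Ici (0:ℝ))), pm ≤ p t)
    (hpplus : ∃ M : ℝ, ∀ᵐ t ∂(volume.restrict (Ici (0:ℝ))), p t ≤ M)
    (q : ℝ) (hq1 : 1 < q) (hq : (n:ℝ) * b / (2 * α) < q)
    (hq2 : ∀ᵐ t ∂(volume.restrict (Ici (0:ℝ))),
      (b:ℝ) / p t + (n:ℝ) * b / (2 * α * q) < 1 ∧
      1 ≤ ((b:ℝ) + 1) / p t + (n:ℝ) * b / (2 * α * q))
    (qb : Rn n → ℝ) (hqb : IsPembq n q qb)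
    (u₀ : Rn n → ℝ) (hu₀m : Measurable u₀) (hu₀ : luxNormR volume qb u₀ < ⊤)
    (f : ℝ → Rn n → ℝ) (hfm : Measurable (Function.uncurry f))
    (hf : ∫⁻ s in Ioi (0:ℝ), luxNormR volume qb (f s) < ⊤) :
    ∃ T > (0:ℝ), ∃ R > (0:ℝ), ∃ u : ℝ → Rn n → ℝ, Measurable (Function.uncurry u) ∧
      eNormT n p q T u ≤ ENNReal.ofReal R ∧
      IsMildSol0 n α b (Ioc 0 T) f u₀ u ∧
      ∀ v : ℝ → Rn n → ℝ, Measurable (Function.uncurry v) →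
        eNormT n p q T v ≤ ENNReal.ofReal R →
        IsMildSol0 n α b (Ioc 0 T) f u₀ v →
        ∀ᵐ tx : ℝ × Rn n ∂((volume.restrict (Ioc (0:ℝ) T)).prod volume),
          v tx.1 tx.2 = u tx.1 tx.2 := by
  obtain ⟨R, hR, u, hum, huR, hu, huniq⟩ := stmt2_general n b α ⟨by linarith [hα.1], hα.2⟩ 1 p
    (fun t ht ↦ hplog.2.1 t ht.1.le) q hq1.le hq u₀ hu₀m (hqb.eLpNorm_lt_top hn (by linarith) hu₀)
    f hfm (hqb.lintegral_eLpNorm_lt_top hn (by linarith)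
      ((lintegral_mono_set Ioc_subset_Ioi_self).trans_lt hf))
  exact ⟨1, one_pos, R, hR, u, hum, huR, hu, fun v hv _ ↦ huniq v hv⟩
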